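/- arXiv:2111.00949 — 2 statements merged into one kernel-verified Lean document; each statement's English description precedes it below -/
import Mathlib

section
/- Suppose n ≥ 1 and r ≥ 2. Then for every function h in C_b^{1,3}([0,∞)), |E[h(F_r)] − χ²_{(r−1)}h| ≤ (r/n)·[293‖h'‖ + (2269 + 431r/n)‖h''‖ + (3533 + 646r/n)‖h'''‖]. -/
open MeasureTheory Finset Real

noncomputable section

instance instMSPerm (r : ℕ) : MeasurableSpace (Equiv.Perm (Fin r)) := ⊤

/-- The joint law of `n` independent uniformly random permutations of `{1, …, r}`:
the uniform probability measure on the finite product space. -/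
def friedmanMeasure (n r : ℕ) : Measure (Fin n → Equiv.Perm (Fin r)) :=
  (PMF.uniformOfFintype (Fin n → Equiv.Perm (Fin r))).toMeasure

/-- `ρ_i(j) = π_i(j) - (r+1)/2`, where `π_i(j) ∈ {1, …, r}` is the rank assigned by the
`i`-th permutation to treatment `j` (a permutation of `Fin r` assigns values in `{0, …, r-1}`,
hence the `+ 1`). -/
def rho (n r : ℕ) (i : Fin n) (j : Fin r) (ω : Fin n → Equiv.Perm (Fin r)) : ℝ :=
  ((ω i j : ℕ) : ℝ) + 1 - ((r : ℝ) + 1) / 2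

/-- `S_j = (√12/√(r(r+1)n)) ∑_{i=1}^n ρ_i(j)`. -/
def Sstat (n r : ℕ) (j : Fin r) (ω : Fin n → Equiv.Perm (Fin r)) : ℝ :=
  Real.sqrt 12 / Real.sqrt ((r : ℝ) * ((r : ℝ) + 1) * (n : ℝ)) * ∑ i, rho n r i j ω

/-- Friedman's statistic `F_r = ∑_{j=1}^r S_j²`. -/
def friedman (n r : ℕ) (ω : Fin n → Equiv.Perm (Fin r)) : ℝ :=
  ∑ j, (Sstat n r j ω) ^ 2

/-- The chi-square distribution with `p` degrees of freedom: the Gamma distribution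
with shape `p/2` and rate `1/2`. -/
def chiSq (p : ℕ) : Measure ℝ := ProbabilityTheory.gammaMeasure ((p : ℝ) / 2) (1 / 2)

end

/-- The unnormalised Gamma weight `x ^ b * exp (-x / 2)`. -/
noncomputable def gammaWeight (b x : ℝ) : ℝ := x ^ b * Real.exp (-(x / 2))

lemma gammaWeight_pos (b : ℝ) {x : ℝ} (hx : 0 < x) : 0 < gammaWeight b x :=
  mul_pos (Real.rpow_pos_of_pos hx b) (Real.exp_pos _)

lemma gammaWeight_eq_mul (b : ℝ) {x : ℝ} (hx : 0 < x) :
    gammaWeight b x = x * gammaWeight (b - 1) x := by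
  unfold gammaWeight
  rw [Real.rpow_sub_one hx.ne']
  field_simp

lemma hasDerivAt_gammaWeight (b : ℝ) {x : ℝ} (hx : 0 < x) :
    HasDerivAt (gammaWeight b) ((b - x / 2) * gammaWeight (b - 1) x) x := by
  have h1 := Real.hasDerivAt_rpow_const (x := x) (p := b) (Or.inl hx.ne')
  have h2 : HasDerivAt (fun t : ℝ => Real.exp (-(t / 2))) (Real.exp (-(x / 2)) * (-(1 / 2))) x :=
    (((hasDerivAt_id x).div_const 2).neg).exp
  refine HasDerivAt.congr_deriv (f := gammaWeight b) (h1.mul h2) ?_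
  unfold gammaWeight
  rw [Real.rpow_sub_one hx.ne']
  field_simp
  ring

lemma tendsto_gammaWeight_mul_zero {b c : ℝ} (hb : 0 < b) {y : ℝ → ℝ}
    (hy : ∀ x, 0 < x → |y x| ≤ c * (1 + x)) :
    Filter.Tendsto (fun x => gammaWeight b x * y x) (nhdsWithin 0 (Set.Ioi 0)) (nhds 0) := by
  have h1 : Filter.Tendsto (fun x => gammaWeight b x * (c * (1 + x)))
      (nhdsWithin 0 (Set.Ioi 0)) (nhds 0) := by
    have : ContinuousAt (fun x => gammaWeight b x * (c * (1 + x))) 0 := by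
      unfold gammaWeight
      have := Real.continuousAt_rpow_const 0 b (Or.inr hb.le)
      fun_prop
    have h2 := this.tendsto
    simp only [gammaWeight, Real.zero_rpow hb.ne', zero_mul] at h2
    exact h2.mono_left nhdsWithin_le_nhds
  refine squeeze_zero_norm' ?_ h1
  filter_upwards [self_mem_nhdsWithin] with x hx
  rw [Real.norm_eq_abs, abs_mul, abs_of_pos (gammaWeight_pos b hx)]
  exact mul_le_mul_of_nonneg_left (hy x hx) (gammaWeight_pos b hx).le

lemma tendsto_gammaWeight_atTop (b : ℝ) :
    Filter.Tendsto (gammaWeight b) Filter.atTop (nhds 0) := by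
  have := tendsto_rpow_mul_exp_neg_mul_atTop_nhds_zero b (1 / 2) (by norm_num)
  refine this.congr fun x => ?_
  unfold gammaWeight
  ring_nf

lemma tendsto_gammaWeight_mul_atTop {b c : ℝ} {y : ℝ → ℝ}
    (hy : ∀ x, 0 < x → |y x| ≤ c * (1 + x)) :
    Filter.Tendsto (fun x => gammaWeight b x * y x) Filter.atTop (nhds 0) := by
  have h1 : Filter.Tendsto (fun x => c * (gammaWeight b x + gammaWeight (b + 1) x))
      Filter.atTop (nhds 0) := by
    simpa using ((tendsto_gammaWeight_atTop b).add (tendsto_gammaWeight_atTop (b + 1))).const_mul c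
  refine squeeze_zero_norm' ?_ h1
  filter_upwards [Filter.eventually_gt_atTop 0] with x hx
  rw [Real.norm_eq_abs, abs_mul, abs_of_pos (gammaWeight_pos b hx),
    gammaWeight_eq_mul (b + 1) hx, add_sub_cancel_right]
  calc gammaWeight b x * |y x| ≤ gammaWeight b x * (c * (1 + x)) :=
        mul_le_mul_of_nonneg_left (hy x hx) (gammaWeight_pos b hx).le
    _ = _ := by ring

lemma nonneg_of_deriv_nonneg_left {u u' : ℝ → ℝ} {x : ℝ} (hx : 0 < x)
    (hu : ∀ t, 0 < t → HasDerivAt u (u' t) t) (hu' : ∀ t, 0 < t → t < x → 0 ≤ u' t)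
    (h0 : Filter.Tendsto u (nhdsWithin 0 (Set.Ioi 0)) (nhds 0)) : 0 ≤ u x := by
  have hmono : MonotoneOn u (Set.Ioc 0 x) := by
    refine monotoneOn_of_hasDerivWithinAt_nonneg (f' := u') (convex_Ioc 0 x)
      (fun t ht => (hu t ht.1).continuousAt.continuousWithinAt) ?_ ?_
    · intro t ht
      rw [interior_Ioc] at ht
      exact (hu t ht.1).hasDerivWithinAt
    · intro t ht
      rw [interior_Ioc] at ht
      exact hu' t ht.1 ht.2
  refine le_of_tendsto h0 ?_
  filter_upwards [Ioc_mem_nhdsGT hx] with t ht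
  exact hmono ht ⟨hx, le_rfl⟩ ht.2

lemma nonneg_of_deriv_nonpos_right {u u' : ℝ → ℝ} {x : ℝ} (hx : 0 < x)
    (hu : ∀ t, 0 < t → HasDerivAt u (u' t) t) (hu' : ∀ t, x < t → u' t ≤ 0)
    (h0 : Filter.Tendsto u Filter.atTop (nhds 0)) : 0 ≤ u x := by
  have hmono : AntitoneOn u (Set.Ici x) := by
    refine antitoneOn_of_hasDerivWithinAt_nonpos (f' := u') (convex_Ici x)
      (fun t ht => (hu t (hx.trans_le ht)).continuousAt.continuousWithinAt) ?_ ?_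
    · intro t ht
      rw [interior_Ici] at ht
      exact (hu t (hx.trans ht)).hasDerivWithinAt
    · intro t ht
      rw [interior_Ici] at ht
      exact hu' t ht
  refine le_of_tendsto h0 ?_
  filter_upwards [Filter.eventually_ge_atTop x] with t ht
  exact hmono (Set.mem_Ici.2 le_rfl) ht ht

lemma abs_le_of_abs_deriv_le_left {v v' P P' : ℝ → ℝ} {x : ℝ} (hx : 0 < x)
    (hv : ∀ t, 0 < t → HasDerivAt v (v' t) t) (hP : ∀ t, 0 < t → HasDerivAt P (P' t) t)
    (hle : ∀ t, 0 < t → t < x → |v' t| ≤ P' t)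
    (hv0 : Filter.Tendsto v (nhdsWithin 0 (Set.Ioi 0)) (nhds 0))
    (hP0 : Filter.Tendsto P (nhdsWithin 0 (Set.Ioi 0)) (nhds 0)) : |v x| ≤ P x := by
  have h1 := nonneg_of_deriv_nonneg_left (u := fun t => P t - v t) (u' := fun t => P' t - v' t) hx
    (fun t ht => (hP t ht).sub (hv t ht))
    (fun t ht htx => sub_nonneg.2 ((le_abs_self _).trans (hle t ht htx)))
    (by simpa using hP0.sub hv0)
  have h2 := nonneg_of_deriv_nonneg_left (u := fun t => P t + v t) (u' := fun t => P' t + v' t) hx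
    (fun t ht => (hP t ht).add (hv t ht))
    (fun t ht htx => by linarith [neg_abs_le (v' t), hle t ht htx])
    (by simpa using hP0.add hv0)
  exact abs_le.2 ⟨by linarith, by linarith⟩

lemma abs_le_of_abs_deriv_le_right {v v' P P' : ℝ → ℝ} {x : ℝ} (hx : 0 < x)
    (hv : ∀ t, 0 < t → HasDerivAt v (v' t) t) (hP : ∀ t, 0 < t → HasDerivAt P (P' t) t)
    (hle : ∀ t, x < t → |v' t| ≤ -P' t)
    (hv0 : Filter.Tendsto v Filter.atTop (nhds 0))
    (hP0 : Filter.Tendsto P Filter.atTop (nhds 0)) : |v x| ≤ P x := by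
  have h1 := nonneg_of_deriv_nonpos_right (u := fun t => P t - v t) (u' := fun t => P' t - v' t) hx
    (fun t ht => (hP t ht).sub (hv t ht))
    (fun t htx => by linarith [neg_abs_le (v' t), hle t htx])
    (by simpa using hP0.sub hv0)
  have h2 := nonneg_of_deriv_nonpos_right (u := fun t => P t + v t) (u' := fun t => P' t + v' t) hx
    (fun t ht => (hP t ht).add (hv t ht))
    (fun t htx => by linarith [le_abs_self (v' t), hle t htx])
    (by simpa using hP0.add hv0)
  exact abs_le.2 ⟨by linarith, by linarith⟩

/-- For `b ≥ 1`, the weight `gammaWeight (b - 1)` is dominated around `x` by an exponential. -/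
lemma gammaWeight_le_exp {b x t d : ℝ} (hb : 1 ≤ b) (hx : 0 < x) (ht : 0 < t)
    (hd : (t / x - 1) * (b - 1 - x / 2) ≤ d) :
    gammaWeight (b - 1) t ≤ gammaWeight (b - 1) x * Real.exp d := by
  have h1 : (t / x) ^ (b - 1) ≤ Real.exp ((t / x - 1) * (b - 1)) := by
    rw [Real.exp_mul]
    refine Real.rpow_le_rpow (by positivity) ?_ (by linarith)
    linarith [Real.add_one_le_exp (t / x - 1)]
  have h2 : t ^ (b - 1) = x ^ (b - 1) * (t / x) ^ (b - 1) := by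
    rw [← Real.mul_rpow hx.le (by positivity)]
    congr 1
    field_simp
  have h3 : (t / x - 1) * (b - 1) + -(t / 2) ≤ -(x / 2) + d := by
    have : (t / x - 1) * (x / 2) = t / 2 - x / 2 := by field_simp
    nlinarith
  unfold gammaWeight
  rw [h2]
  calc x ^ (b - 1) * (t / x) ^ (b - 1) * Real.exp (-(t / 2))
      ≤ x ^ (b - 1) * Real.exp ((t / x - 1) * (b - 1)) * Real.exp (-(t / 2)) := by
        gcongr
    _ = x ^ (b - 1) * Real.exp ((t / x - 1) * (b - 1) + -(t / 2)) := by
        rw [Real.exp_add]; ring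
    _ ≤ x ^ (b - 1) * Real.exp (-(x / 2) + d) := by gcongr
    _ = _ := by rw [Real.exp_add]; ring

section FirstOrder

variable {b c M : ℝ} {k k' K : ℝ → ℝ}

lemma hasDerivAt_gammaWeight_mul {x : ℝ} (hx : 0 < x) (hk : HasDerivAt k (k' x) x)
    (hode : x * k' x + (b - x / 2) * k x = K x) :
    HasDerivAt (fun t => gammaWeight b t * k t) (gammaWeight (b - 1) x * K x) x := by
  refine ((hasDerivAt_gammaWeight b hx).mul hk).congr_deriv ?_
  rw [gammaWeight_eq_mul b hx, ← hode]
  ring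

lemma gammaWeight_mul_eq {x : ℝ} (hx : 0 < x) :
    gammaWeight b x * k x = gammaWeight (b - 1) x * (x * k x) := by
  rw [gammaWeight_eq_mul b hx]; ring

/-- Bounds for a solution of the first-order equation `x k' + (b - x/2) k = K` with bounded
right-hand side which has moderate growth at both ends of `(0, ∞)`. -/
lemma firstOrder_bounds (hb : 1 < b) (hk : ∀ x, 0 < x → HasDerivAt k (k' x) x)
    (hode : ∀ x, 0 < x → x * k' x + (b - x / 2) * k x = K x)
    (hK : ∀ x, 0 < x → |K x| ≤ M) (hgrow : ∀ x, 0 < x → |x * k x| ≤ c * (1 + x))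
    {x : ℝ} (hx : 0 < x) :
    |k x| ≤ 1.72 * M ∧ |x * k' x| ≤ 2 * M := by
  have hM : 0 ≤ M := (abs_nonneg _).trans (hK 1 one_pos)
  have hv := fun t (ht : 0 < t) => hasDerivAt_gammaWeight_mul ht (hk t ht) (hode t ht)
  have hv0 : Filter.Tendsto (fun t => gammaWeight b t * k t) (nhdsWithin 0 (Set.Ioi 0))
      (nhds 0) := by
    refine (tendsto_gammaWeight_mul_zero (b := b - 1) (by linarith) hgrow).congr' ?_
    filter_upwards [self_mem_nhdsWithin] with t ht
    exact (gammaWeight_mul_eq ht).symm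
  have hvT : Filter.Tendsto (fun t => gammaWeight b t * k t) Filter.atTop (nhds 0) := by
    refine (tendsto_gammaWeight_mul_atTop (b := b - 1) hgrow).congr' ?_
    filter_upwards [Filter.eventually_gt_atTop 0] with t ht
    exact (gammaWeight_mul_eq ht).symm
  have hW0 : Filter.Tendsto (gammaWeight b) (nhdsWithin 0 (Set.Ioi 0)) (nhds 0) := by
    simpa using tendsto_gammaWeight_mul_zero (b := b) (c := 1) (y := fun _ => 1) (by linarith)
      (fun t ht => by simp; linarith)
  have hder : ∀ t, 0 < t → |gammaWeight (b - 1) t * K t| ≤ gammaWeight (b - 1) t * M := by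
    intro t ht
    rw [abs_mul, abs_of_pos (gammaWeight_pos _ ht)]
    exact mul_le_mul_of_nonneg_left (hK t ht) (gammaWeight_pos _ ht).le
  have hWx := gammaWeight_pos b hx
  have habs : |gammaWeight b x * k x| = gammaWeight b x * |k x| := by
    rw [abs_mul, abs_of_pos hWx]
  have key : |k x| ≤ 1.72 * M ∧ |b - x / 2| * |k x| ≤ M := by
    rcases le_total x (2 * b) with hxb | hxb
    · constructor
      · have h := abs_le_of_abs_deriv_le_left (v := fun t => gammaWeight b t * k t)
          (P := fun t => M * gammaWeight b x * (Real.exp 1 - Real.exp (1 - t / x)))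
          (P' := fun t => M * gammaWeight b x * (Real.exp (1 - t / x) * (1 / x))) hx hv
          (fun t _ => by
            have : HasDerivAt (fun t : ℝ => Real.exp (1 - t / x))
                (Real.exp (1 - t / x) * (-(1 / x))) t :=
              (((hasDerivAt_id t).div_const x).const_sub 1).exp
            refine ((this.const_sub (Real.exp 1)).const_mul (M * gammaWeight b x)).congr_deriv ?_
            ring)
          (fun t ht htx => by
            refine (hder t ht).trans ?_
            have := gammaWeight_le_exp (d := 1 - t / x) hb.le hx ht (by
              have : t / x < 1 := (div_lt_one hx).2 htx
              nlinarith)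
            rw [gammaWeight_eq_mul b hx]
            calc gammaWeight (b - 1) t * M
                ≤ gammaWeight (b - 1) x * Real.exp (1 - t / x) * M := by gcongr
              _ = _ := by field_simp)
          hv0 (by
            have : ContinuousAt
              (fun t => M * gammaWeight b x * (Real.exp 1 - Real.exp (1 - t / x))) 0 := by fun_prop
            have h2 := this.tendsto
            simp only [zero_div, sub_zero, sub_self, mul_zero] at h2
            exact h2.mono_left nhdsWithin_le_nhds)
        rw [habs, div_self hx.ne', sub_self, Real.exp_zero] at h
        have he : Real.exp 1 - 1 ≤ 1.72 := by linarith [Real.exp_one_lt_d9]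
        refine le_of_mul_le_mul_left (h.trans ?_) hWx
        calc M * gammaWeight b x * (Real.exp 1 - 1) ≤ M * gammaWeight b x * 1.72 := by gcongr
          _ = _ := by ring
      · have h := abs_le_of_abs_deriv_le_left
          (v := fun t => (b - x / 2) * (gammaWeight b t * k t))
          (P := fun t => M * gammaWeight b t) hx (fun t ht => (hv t ht).const_mul (b - x / 2))
          (fun t ht => (hasDerivAt_gammaWeight b ht).const_mul M)
          (fun t ht htx => by
            rw [abs_mul, abs_of_nonneg (by linarith : 0 ≤ b - x / 2)]
            calc (b - x / 2) * |gammaWeight (b - 1) t * K t|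
                ≤ (b - t / 2) * (gammaWeight (b - 1) t * M) :=
                  mul_le_mul (by linarith) (hder t ht) (abs_nonneg _) (by linarith)
              _ = _ := by ring)
          (by simpa using hv0.const_mul (b - x / 2)) (by simpa using hW0.const_mul M)
        rw [abs_mul, habs] at h
        refine le_of_mul_le_mul_left (a := gammaWeight b x) ?_ hWx
        linarith
    · constructor
      · have h := abs_le_of_abs_deriv_le_right (v := fun t => gammaWeight b t * k t)
          (P := fun t => M * gammaWeight b x * Real.exp (1 - t / x))
          (P' := fun t => M * gammaWeight b x * (Real.exp (1 - t / x) * (-(1 / x)))) hx hv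
          (fun t _ => by
            have : HasDerivAt (fun t : ℝ => Real.exp (1 - t / x))
                (Real.exp (1 - t / x) * (-(1 / x))) t :=
              (((hasDerivAt_id t).div_const x).const_sub 1).exp
            exact this.const_mul (M * gammaWeight b x))
          (fun t htx => by
            have ht := hx.trans htx
            refine (hder t ht).trans ?_
            have := gammaWeight_le_exp (d := 1 - t / x) hb.le hx ht (by
              have : 1 < t / x := (one_lt_div hx).2 htx
              nlinarith)
            rw [gammaWeight_eq_mul b hx]
            calc gammaWeight (b - 1) t * M
                ≤ gammaWeight (b - 1) x * Real.exp (1 - t / x) * M := by gcongr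
              _ = _ := by field_simp)
          hvT (by
            have h1 : Filter.Tendsto (fun t : ℝ => 1 - t / x) Filter.atTop Filter.atBot := by
              simp_rw [sub_eq_add_neg]
              exact Filter.tendsto_atBot_add_const_left _ _
                (Filter.tendsto_neg_atTop_atBot.comp (Filter.tendsto_id.atTop_div_const hx))
            simpa using (Real.tendsto_exp_atBot.comp h1).const_mul (M * gammaWeight b x))
        rw [habs, div_self hx.ne', sub_self, Real.exp_zero] at h
        refine le_of_mul_le_mul_left (h.trans ?_) hWx
        nlinarith [mul_nonneg hM hWx.le]
      · have h := abs_le_of_abs_deriv_le_right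
          (v := fun t => (b - x / 2) * (gammaWeight b t * k t))
          (P := fun t => M * gammaWeight b t) hx (fun t ht => (hv t ht).const_mul (b - x / 2))
          (fun t ht => (hasDerivAt_gammaWeight b ht).const_mul M)
          (fun t htx => by
            have ht := hx.trans htx
            rw [abs_mul, abs_of_nonpos (by linarith : b - x / 2 ≤ 0)]
            calc -(b - x / 2) * |gammaWeight (b - 1) t * K t|
                ≤ -(b - t / 2) * (gammaWeight (b - 1) t * M) :=
                  mul_le_mul (by linarith) (hder t ht) (abs_nonneg _) (by linarith)
              _ = _ := by ring)
          (by simpa using hvT.const_mul (b - x / 2))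
          (by simpa using (tendsto_gammaWeight_atTop b).const_mul M)
        rw [abs_mul, habs] at h
        refine le_of_mul_le_mul_left (a := gammaWeight b x) ?_ hWx
        linarith
  refine ⟨key.1, ?_⟩
  have : x * k' x = K x - (b - x / 2) * k x := by linarith [hode x hx]
  rw [this]
  calc |K x - (b - x / 2) * k x| ≤ |K x| + |(b - x / 2) * k x| := abs_sub _ _
    _ ≤ M + M := add_le_add (hK x hx) (by rw [abs_mul]; exact key.2)
    _ = _ := by ring

end FirstOrder

lemma nonneg_of_antitone_factor {b : ℝ} {u φ : ℝ → ℝ} {x : ℝ} (hx : 0 < x)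
    (hu : ∀ t, 0 < t → HasDerivAt u (gammaWeight (b - 1) t * φ t) t)
    (hφ : AntitoneOn φ (Set.Ioi 0))
    (h0 : Filter.Tendsto u (nhdsWithin 0 (Set.Ioi 0)) (nhds 0))
    (hT : Filter.Tendsto u Filter.atTop (nhds 0)) : 0 ≤ u x := by
  rcases le_total 0 (φ x) with h | h
  · exact nonneg_of_deriv_nonneg_left hx hu
      (fun t ht htx => mul_nonneg (gammaWeight_pos _ ht).le (h.trans (hφ ht hx htx.le))) h0
  · exact nonneg_of_deriv_nonpos_right hx hu
      (fun t htx => mul_nonpos_of_nonneg_of_nonpos (gammaWeight_pos _ (hx.trans htx)).le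
        ((hφ hx (hx.trans htx) htx.le).trans h)) hT

lemma antitoneOn_of_abs_deriv_le {H H' : ℝ → ℝ} {C : ℝ}
    (hH : ∀ t, 0 < t → HasDerivAt H (H' t) t) (hC : ∀ t, 0 < t → |H' t| ≤ C) (a : ℝ) :
    AntitoneOn (fun t => a - C * t + H t) (Set.Ioi 0) := by
  have hd : ∀ t, 0 < t → HasDerivAt (fun t => a - C * t + H t) (-(C * 1) + H' t) t := fun t ht =>
    (((hasDerivAt_id t).const_mul C).const_sub a).add (hH t ht)
  refine antitoneOn_of_hasDerivWithinAt_nonpos (f' := fun t => -(C * 1) + H' t) (convex_Ioi 0)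
    (fun t ht => (hd t ht).continuousAt.continuousWithinAt) ?_ ?_
  · intro t ht
    rw [interior_Ioi] at ht
    exact (hd t ht).hasDerivWithinAt
  · intro t ht
    rw [interior_Ioi] at ht
    linarith [le_abs_self (H' t), hC t ht]

/-- If `H` is `C`-Lipschitz and centred with respect to the Gamma weight, then its weighted
primitive is at most that of a linear function. -/
lemma abs_primitive_le {b C : ℝ} (hb : 0 < b) {v H H' : ℝ → ℝ}
    (hv : ∀ t, 0 < t → HasDerivAt v (gammaWeight (b - 1) t * H t) t)
    (h0 : Filter.Tendsto v (nhdsWithin 0 (Set.Ioi 0)) (nhds 0))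
    (hT : Filter.Tendsto v Filter.atTop (nhds 0))
    (hH : ∀ t, 0 < t → HasDerivAt H (H' t) t) (hC : ∀ t, 0 < t → |H' t| ≤ C)
    {x : ℝ} (hx : 0 < x) : |v x| ≤ 2 * C * gammaWeight b x := by
  have hW0 : Filter.Tendsto (gammaWeight b) (nhdsWithin 0 (Set.Ioi 0)) (nhds 0) := by
    simpa using tendsto_gammaWeight_mul_zero (b := b) (c := 1) (y := fun _ => 1) hb
      (fun t ht => by simp; linarith)
  have hWT := tendsto_gammaWeight_atTop b
  have h1 := nonneg_of_antitone_factor (b := b) (u := fun t => 2 * C * gammaWeight b t + v t)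
    (φ := fun t => 2 * C * b - C * t + H t) hx
    (fun t ht => (((hasDerivAt_gammaWeight b ht).const_mul (2 * C)).add (hv t ht)).congr_deriv
      (by ring)) (antitoneOn_of_abs_deriv_le hH hC _)
    (by simpa using (hW0.const_mul (2 * C)).add h0)
    (by simpa using (hWT.const_mul (2 * C)).add hT)
  have h2 := nonneg_of_antitone_factor (b := b) (u := fun t => 2 * C * gammaWeight b t - v t)
    (φ := fun t => 2 * C * b - C * t + -H t) hx
    (fun t ht => (((hasDerivAt_gammaWeight b ht).const_mul (2 * C)).sub (hv t ht)).congr_deriv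
      (by ring))
    (antitoneOn_of_abs_deriv_le (fun t ht => (hH t ht).neg)
      (fun t ht => by rw [abs_neg]; exact hC t ht) _)
    (by simpa using (hW0.const_mul (2 * C)).sub h0)
    (by simpa using (hWT.const_mul (2 * C)).sub hT)
  exact abs_le.2 ⟨by linarith, by linarith⟩

/-- Solution of the Gamma Stein equation for a centred Lipschitz right-hand side with two
derivatives, together with bounds on its derivatives. -/
lemma exists_gamma_stein_solution {b C1 C2 : ℝ} (hb : 0 < b) {H h' h'' v : ℝ → ℝ}
    (hv : ∀ t, 0 < t → HasDerivAt v (gammaWeight (b - 1) t * H t) t)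
    (h0 : Filter.Tendsto v (nhdsWithin 0 (Set.Ioi 0)) (nhds 0))
    (hT : Filter.Tendsto v Filter.atTop (nhds 0))
    (hd1 : ∀ x, 0 ≤ x → HasDerivAt H (h' x) x) (hd2 : ∀ x, 0 ≤ x → HasDerivAt h' (h'' x) x)
    (hb1 : ∀ x, 0 ≤ x → |h' x| ≤ C1) (hb2 : ∀ x, 0 ≤ x → |h'' x| ≤ C2) :
    ∃ g k l l' : ℝ → ℝ,
      (∀ x, 0 < x → HasDerivAt g (k x) x) ∧ (∀ x, 0 < x → HasDerivAt k (l x) x) ∧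
      (∀ x, 0 < x → HasDerivAt l (l' x) x) ∧ ContinuousOn g (Set.Ici 0) ∧
      (∀ x, 0 ≤ x → x * k x + (b - x / 2) * g x = H x) ∧
      (∀ x, 0 < x → |k x| ≤ 3.44 * C1) ∧
      (∀ x, 0 < x → |l x| ≤ 1.72 * (C2 + 3.44 * C1)) ∧
      (∀ x, 0 < x → |x * l' x| ≤ 2 * (C2 + 3.44 * C1)) := by
  have hC1 : 0 ≤ C1 := (abs_nonneg _).trans (hb1 0 le_rfl)
  set g : ℝ → ℝ := fun x => if x = 0 then H 0 / b else v x / gammaWeight b x with hg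
  set k : ℝ → ℝ := fun x => (H x - (b - x / 2) * g x) / x with hk
  set l : ℝ → ℝ := fun x => (h' x + 1 / 2 * g x - (b + 1 - x / 2) * k x) / x with hl
  set l' : ℝ → ℝ := fun x => (h'' x + k x - (b + 2 - x / 2) * l x) / x with hl'
  have hgpos : ∀ x, 0 < x → g x = v x / gammaWeight b x := fun x hx => by simp [hg, hx.ne']
  have stein : ∀ x, 0 ≤ x → x * k x + (b - x / 2) * g x = H x := by
    intro x hx
    rcases hx.eq_or_lt with rfl | hx
    · simp [hg]; field_simp
    · simp only [hk]; field_simp; ring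
  have ode1 : ∀ x, 0 < x → x * l x + (b + 1 - x / 2) * k x = h' x + 1 / 2 * g x := by
    intro x hx
    simp only [hl]; field_simp; ring
  have ode2 : ∀ x, 0 < x → x * l' x + (b + 2 - x / 2) * l x = h'' x + k x := by
    intro x hx
    simp only [hl']; field_simp; ring
  have dg : ∀ x, 0 < x → HasDerivAt g (k x) x := by
    intro x hx
    have hW := gammaWeight_pos b hx
    have hW' := gammaWeight_pos (b - 1) hx
    have h1 := (hv x hx).div (hasDerivAt_gammaWeight b hx) hW.ne'
    have h2 : HasDerivAt g _ x := h1.congr_of_eventuallyEq (by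
      filter_upwards [lt_mem_nhds hx] with t ht
      exact hgpos t ht)
    refine h2.congr_deriv ?_
    simp only [hk]
    rw [hgpos x hx, gammaWeight_eq_mul b hx]
    field_simp
  have dlin : ∀ (c x : ℝ), HasDerivAt (fun t : ℝ => c - t / 2) (-(1 / 2)) x := fun c x =>
    ((hasDerivAt_id x).div_const 2).const_sub c
  have dk : ∀ x, 0 < x → HasDerivAt k (l x) x := by
    intro x hx
    have h1 := ((hd1 x hx.le).sub ((dlin b x).mul (dg x hx))).div (hasDerivAt_id x) hx.ne'
    refine HasDerivAt.congr_deriv (f := k) h1 ?_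
    have e : H x - (b - x / 2) * g x = x * k x := by linarith [stein x hx.le]
    simp only [Pi.mul_apply, Pi.sub_apply, id, mul_one]
    rw [e, hl]
    field_simp
    ring
  have dl : ∀ x, 0 < x → HasDerivAt l (l' x) x := by
    intro x hx
    have h1 := (((hd2 x hx.le).add ((dg x hx).const_mul (1 / 2))).sub
      ((dlin (b + 1) x).mul (dk x hx))).div (hasDerivAt_id x) hx.ne'
    refine HasDerivAt.congr_deriv (f := l) h1 ?_
    have e : h' x + 1 / 2 * g x - (b + 1 - x / 2) * k x = x * l x := by linarith [ode1 x hx]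
    simp only [Pi.mul_apply, Pi.sub_apply, Pi.add_apply, id, mul_one]
    rw [e, hl']
    field_simp
    ring
  have bg : ∀ x, 0 < x → |g x| ≤ 2 * C1 := by
    intro x hx
    have := abs_primitive_le hb hv h0 hT (fun t ht => hd1 t ht.le) (fun t ht => hb1 t ht.le) hx
    rw [hgpos x hx, abs_div, abs_of_pos (gammaWeight_pos b hx)]
    exact (div_le_iff₀ (gammaWeight_pos b hx)).2 this
  have hHgrow : ∀ x, 0 < x → |H x| ≤ |H 0| + C1 * x := by
    intro x hx
    have := (convex_Ici (0 : ℝ)).norm_image_sub_le_of_norm_hasDerivWithin_le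
      (fun t ht => (hd1 t ht).hasDerivWithinAt) (fun t ht => hb1 t ht)
      (Set.mem_Ici.2 le_rfl) (Set.mem_Ici.2 hx.le)
    rw [Real.norm_eq_abs, Real.norm_eq_abs, sub_zero, abs_of_pos hx] at this
    linarith [abs_sub_abs_le_abs_sub (H x) (H 0)]
  have bk : ∀ x, 0 < x → |k x| ≤ 3.44 * C1 := by
    intro x hx
    have := (firstOrder_bounds (b := b + 1) (c := |H 0| + 2 * C1 * (1 + b)) (M := 2 * C1)
      (by linarith) dk ode1
      (fun x hx => by
        rw [abs_le]
        have h1 := abs_le.1 (hb1 x hx.le)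
        have h2 := abs_le.1 (bg x hx)
        constructor <;> linarith)
      (fun x hx => by
        have e : x * k x = H x - (b - x / 2) * g x := by linarith [stein x hx.le]
        rw [e]
        calc |H x - (b - x / 2) * g x| ≤ |H x| + |(b - x / 2) * g x| := abs_sub _ _
          _ ≤ (|H 0| + C1 * x) + (b + x / 2) * (2 * C1) := by
            refine add_le_add (hHgrow x hx) ?_
            rw [abs_mul]
            refine mul_le_mul ?_ (bg x hx) (abs_nonneg _) (by linarith)
            rw [abs_le]; constructor <;> linarith
          _ ≤ _ := by nlinarith [mul_nonneg (abs_nonneg (H 0)) hx.le,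
              mul_nonneg (mul_nonneg hC1 hb.le) hx.le, mul_nonneg hC1 hx.le]) hx).1
    linarith
  have b2 : ∀ {x : ℝ}, 0 < x →
      |l x| ≤ 1.72 * (C2 + 3.44 * C1) ∧ |x * l' x| ≤ 2 * (C2 + 3.44 * C1) := by
    refine firstOrder_bounds (b := b + 2) (c := 2 * C1 + 3.44 * C1 * (b + 2))
      (by linarith) dl ode2 ?_ ?_
    · intro x hx
      exact (abs_add_le _ _).trans (add_le_add (hb2 x hx.le) (bk x hx))
    · intro x hx
      have e : x * l x = (h' x + 1 / 2 * g x) - (b + 1 - x / 2) * k x := by linarith [ode1 x hx]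
      rw [e]
      calc |(h' x + 1 / 2 * g x) - (b + 1 - x / 2) * k x|
          ≤ |h' x + 1 / 2 * g x| + |(b + 1 - x / 2) * k x| := abs_sub _ _
        _ ≤ 2 * C1 + (b + 1 + x / 2) * (3.44 * C1) := by
          refine add_le_add ?_ ?_
          · rw [abs_le]
            have h1 := abs_le.1 (hb1 x hx.le)
            have h2 := abs_le.1 (bg x hx)
            constructor <;> linarith
          · rw [abs_mul]
            refine mul_le_mul ?_ (bk x hx) (abs_nonneg _) (by linarith)
            rw [abs_le]; constructor <;> linarith
        _ ≤ _ := by nlinarith [mul_nonneg hC1 hx.le, mul_nonneg (mul_nonneg hC1 hb.le) hx.le]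
  refine ⟨g, k, l, l', dg, dk, dl, ?_, stein, bk, fun x hx => (b2 hx).1, fun x hx => (b2 hx).2⟩
  intro x hx
  rcases (Set.mem_Ici.1 hx).eq_or_lt with rfl | hx
  swap
  · exact (dg x hx).continuousAt.continuousWithinAt
  rw [← Set.Ioi_insert, continuousWithinAt_insert_self]
  have hxk : Filter.Tendsto (fun x => x * k x) (nhdsWithin 0 (Set.Ioi 0)) (nhds 0) := by
    have h1 : Filter.Tendsto (fun x : ℝ => x * (3.44 * C1)) (nhdsWithin 0 (Set.Ioi 0))
        (nhds 0) := by
      have : ContinuousAt (fun x : ℝ => x * (3.44 * C1)) 0 := by fun_prop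
      have h2 := this.tendsto
      rw [zero_mul] at h2
      exact h2.mono_left nhdsWithin_le_nhds
    refine squeeze_zero_norm' ?_ h1
    filter_upwards [self_mem_nhdsWithin] with x hx
    rw [Real.norm_eq_abs, abs_mul, abs_of_pos (Set.mem_Ioi.1 hx)]
    exact mul_le_mul_of_nonneg_left (bk x hx) (le_of_lt hx)
  have hH0 : Filter.Tendsto H (nhdsWithin 0 (Set.Ioi 0)) (nhds (H 0)) :=
    (hd1 0 le_rfl).continuousAt.tendsto.mono_left nhdsWithin_le_nhds
  have hlin : Filter.Tendsto (fun x : ℝ => b - x / 2) (nhdsWithin 0 (Set.Ioi 0)) (nhds b) := by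
    have : ContinuousAt (fun x : ℝ => b - x / 2) 0 := by fun_prop
    have h2 := this.tendsto
    rw [zero_div, sub_zero] at h2
    exact h2.mono_left nhdsWithin_le_nhds
  have hlim := (hH0.sub hxk).div hlin hb.ne'
  rw [sub_zero] at hlim
  have hg0 : g 0 = H 0 / b := by simp [hg]
  rw [ContinuousWithinAt, hg0]
  refine hlim.congr' ?_
  have : Set.Ioo (0 : ℝ) (2 * b) ∈ nhdsWithin 0 (Set.Ioi 0) := Ioo_mem_nhdsGT (by linarith)
  filter_upwards [this] with x hx
  have hne : b - x / 2 ≠ 0 := by linarith [hx.2]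
  simp only [Pi.div_apply]
  rw [div_eq_iff hne]
  linarith [stein x hx.1.le]

lemma integrableOn_gammaWeight {b : ℝ} (hb : -1 < b) :
    IntegrableOn (gammaWeight b) (Set.Ioi 0) := by
  refine (integrableOn_rpow_mul_exp_neg_mul_rpow (p := 1) (b := 1 / 2) hb one_pos
    (by norm_num)).congr_fun (fun x _ => ?_) measurableSet_Ioi
  simp only [gammaWeight, Real.rpow_one]
  ring_nf

lemma continuousAt_gammaWeight (b : ℝ) {x : ℝ} (hx : 0 < x) : ContinuousAt (gammaWeight b) x :=
  (hasDerivAt_gammaWeight b hx).continuousAt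

lemma integrableOn_gammaWeight_mul {b c : ℝ} (hb : -1 < b) {y : ℝ → ℝ}
    (hy : ContinuousOn y (Set.Ioi 0)) (hgrow : ∀ x, 0 < x → |y x| ≤ c * (1 + x)) :
    IntegrableOn (fun x => gammaWeight b x * y x) (Set.Ioi 0) := by
  have hmaj : IntegrableOn (fun x => c * (gammaWeight b x + gammaWeight (b + 1) x)) (Set.Ioi 0) :=
    ((integrableOn_gammaWeight hb).add (integrableOn_gammaWeight (by linarith))).const_mul c
  refine hmaj.mono' ?_ ?_
  · refine ContinuousOn.aestronglyMeasurable (fun x hx => ?_) measurableSet_Ioi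
    exact (continuousAt_gammaWeight b hx).continuousWithinAt.mul (hy x hx)
  · refine (ae_restrict_iff' measurableSet_Ioi).2 (ae_of_all _ fun x hx => ?_)
    have hx : 0 < x := hx
    rw [Real.norm_eq_abs, abs_mul, abs_of_pos (gammaWeight_pos b hx),
      gammaWeight_eq_mul (b + 1) hx, add_sub_cancel_right]
    calc gammaWeight b x * |y x| ≤ gammaWeight b x * (c * (1 + x)) :=
          mul_le_mul_of_nonneg_left (hgrow x hx) (gammaWeight_pos b hx).le
      _ = _ := by ring

lemma integral_chiSq_eq {p : ℕ} (hp : 1 ≤ p) (f : ℝ → ℝ) :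
    ∫ x, f x ∂(chiSq p) = (1 / 2) ^ ((p : ℝ) / 2) / Gamma ((p : ℝ) / 2) *
      ∫ x in Set.Ioi 0, gammaWeight ((p : ℝ) / 2 - 1) x * f x := by
  have hp' : (0 : ℝ) < p / 2 := by positivity
  unfold chiSq ProbabilityTheory.gammaMeasure
  rw [integral_withDensity_eq_integral_toReal_smul
    (f := ProbabilityTheory.gammaPDF _ _)
    ((ProbabilityTheory.measurable_gammaPDFReal _ _).ennreal_ofReal)
    (ae_of_all _ fun x => ENNReal.ofReal_lt_top), ← integral_const_mul,
    ← integral_indicator measurableSet_Ioi]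
  refine integral_congr_ae ?_
  have h0 : ∀ᵐ x : ℝ, x ≠ 0 := by simp [ae_iff, measure_singleton]
  filter_upwards [h0] with x hx
  rcases lt_or_gt_of_ne hx with hx | hx
  · have : x ∉ Set.Ioi (0 : ℝ) := by simp [hx.le]
    rw [Set.indicator_of_notMem this]
    simp [ProbabilityTheory.gammaPDF_of_neg hx]
  · rw [Set.indicator_of_mem (Set.mem_Ioi.2 hx), ProbabilityTheory.gammaPDF,
      ENNReal.toReal_ofReal (ProbabilityTheory.gammaPDFReal_nonneg hp' (by norm_num) _),
      ProbabilityTheory.gammaPDFReal, if_pos hx.le, smul_eq_mul, gammaWeight]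
    ring_nf

lemma integral_gammaWeight_mul_sub_mean {p : ℕ} (hp : 1 ≤ p) {c : ℝ} {y : ℝ → ℝ}
    (hy : ContinuousOn y (Set.Ioi 0)) (hgrow : ∀ x, 0 < x → |y x| ≤ c * (1 + x)) :
    ∫ x in Set.Ioi 0, gammaWeight ((p : ℝ) / 2 - 1) x * (y x - ∫ x, y x ∂(chiSq p)) = 0 := by
  have hp' : (0 : ℝ) < p / 2 := by positivity
  have : IsProbabilityMeasure (chiSq p) :=
    ProbabilityTheory.isProbabilityMeasure_gammaMeasure hp' (by norm_num)
  have h1 := integral_chiSq_eq hp (fun _ => 1)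
  have h2 := integral_chiSq_eq hp y
  rw [integral_const, probReal_univ, one_smul] at h1
  simp only [mul_one] at h1
  set m := ∫ x, y x ∂(chiSq p)
  set A := (1 / 2 : ℝ) ^ ((p : ℝ) / 2) / Gamma ((p : ℝ) / 2)
  have hA : A ≠ 0 := fun h => by simp [h] at h1
  simp only [mul_sub]
  rw [integral_sub (integrableOn_gammaWeight_mul (by linarith) hy hgrow)
    ((integrableOn_gammaWeight (by linarith)).mul_const m), integral_mul_const]
  refine mul_left_cancel₀ hA ?_
  linear_combination m * h1 - h2

lemma exists_chiSq_primitive {p : ℕ} (hp : 1 ≤ p) {c : ℝ} {y : ℝ → ℝ}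
    (hy : ContinuousOn y (Set.Ioi 0)) (hgrow : ∀ x, 0 < x → |y x| ≤ c * (1 + x)) :
    ∃ v : ℝ → ℝ, (∀ t, 0 < t → HasDerivAt v
        (gammaWeight ((p : ℝ) / 2 - 1) t * (y t - ∫ x, y x ∂(chiSq p))) t) ∧
      Filter.Tendsto v (nhdsWithin 0 (Set.Ioi 0)) (nhds 0) ∧
      Filter.Tendsto v Filter.atTop (nhds 0) := by
  have hp' : (0 : ℝ) < p / 2 := by positivity
  have hint := integral_gammaWeight_mul_sub_mean hp hy hgrow
  set m := ∫ x, y x ∂(chiSq p)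
  set f : ℝ → ℝ := fun t => gammaWeight ((p : ℝ) / 2 - 1) t * (y t - m) with hf
  have hfi : IntegrableOn f (Set.Ioi 0) := by
    refine integrableOn_gammaWeight_mul (c := c + |m|) (by linarith)
      (hy.sub continuousOn_const) (fun x hx => ?_)
    calc |y x - m| ≤ |y x| + |m| := abs_sub _ _
      _ ≤ c * (1 + x) + |m| := by linarith [hgrow x hx]
      _ ≤ _ := by nlinarith [mul_nonneg (abs_nonneg m) hx.le]
  have hii : ∀ t, 0 ≤ t → IntervalIntegrable f volume 0 t := fun t ht => by
    rw [intervalIntegrable_iff_integrableOn_Ioc_of_le ht]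
    exact hfi.mono_set Set.Ioc_subset_Ioi_self
  have hfc : ContinuousOn f (Set.Ioi 0) := fun x hx =>
    (continuousAt_gammaWeight _ hx).continuousWithinAt.mul ((hy x hx).sub continuousWithinAt_const)
  refine ⟨fun x => ∫ t in (0 : ℝ)..x, f t, fun t ht => ?_, ?_, ?_⟩
  · exact intervalIntegral.integral_hasDerivAt_right (hii t ht.le)
      (hfc.stronglyMeasurableAtFilter isOpen_Ioi t ht) (hfc.continuousAt (Ioi_mem_nhds ht))
  · have h1 := intervalIntegral.continuousWithinAt_primitive (f := f) (μ := volume) (a := 0)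
      (b₀ := 0) (b₁ := 0) (b₂ := 1) (measure_singleton _) (by simpa using hii 1 zero_le_one)
    have h2 := h1.tendsto
    rw [intervalIntegral.integral_same] at h2
    refine h2.mono_left ?_
    rw [← nhdsWithin_Ioc_eq_nhdsGT (zero_lt_one' ℝ)]
    exact nhdsWithin_mono _ Set.Ioc_subset_Icc_self
  · have := intervalIntegral_tendsto_integral_Ioi 0 hfi Filter.tendsto_id
    rwa [hint] at this

/-- Solution of the chi-square Stein equation with bounds on the derivatives. -/
lemma exists_chiSq_stein_solution {p : ℕ} (hp : 1 ≤ p) {C1 C2 : ℝ} {h h' h'' : ℝ → ℝ}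
    (hd1 : ∀ x, 0 ≤ x → HasDerivAt h (h' x) x) (hd2 : ∀ x, 0 ≤ x → HasDerivAt h' (h'' x) x)
    (hb1 : ∀ x, 0 ≤ x → |h' x| ≤ C1) (hb2 : ∀ x, 0 ≤ x → |h'' x| ≤ C2) :
    ∃ g k l l' : ℝ → ℝ,
      (∀ x, 0 < x → HasDerivAt g (k x) x) ∧ (∀ x, 0 < x → HasDerivAt k (l x) x) ∧
      (∀ x, 0 < x → HasDerivAt l (l' x) x) ∧ ContinuousOn g (Set.Ici 0) ∧
      (∀ x, 0 ≤ x → x * k x + ((p : ℝ) / 2 - x / 2) * g x = h x - ∫ x, h x ∂(chiSq p)) ∧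
      (∀ x, 0 < x → |k x| ≤ 3.44 * C1) ∧
      (∀ x, 0 < x → |l x| ≤ 1.72 * (C2 + 3.44 * C1)) ∧
      (∀ x, 0 < x → |x * l' x| ≤ 2 * (C2 + 3.44 * C1)) := by
  have hC1 : 0 ≤ C1 := (abs_nonneg _).trans (hb1 0 le_rfl)
  have hgrow : ∀ x, 0 < x → |h x| ≤ (|h 0| + C1) * (1 + x) := by
    intro x hx
    have := (convex_Ici (0 : ℝ)).norm_image_sub_le_of_norm_hasDerivWithin_le
      (fun t ht => (hd1 t ht).hasDerivWithinAt) (fun t ht => hb1 t ht)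
      (Set.mem_Ici.2 le_rfl) (Set.mem_Ici.2 hx.le)
    rw [Real.norm_eq_abs, Real.norm_eq_abs, sub_zero, abs_of_pos hx] at this
    nlinarith [abs_sub_abs_le_abs_sub (h x) (h 0), mul_nonneg (abs_nonneg (h 0)) hx.le]
  obtain ⟨v, hv, hv0, hvT⟩ := exists_chiSq_primitive hp
    (fun x hx => (hd1 x (le_of_lt hx)).continuousAt.continuousWithinAt) hgrow
  exact exists_gamma_stein_solution (by positivity) hv hv0 hvT
    (fun x hx => (hd1 x hx).sub_const _) hd2 hb1 hb2

section Taylor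

variable {φ φ' φ'' φ''' : ℝ → ℝ} {m d : ℝ}

lemma continuousOn_add_of_Icc (hc : ContinuousOn φ (Set.Icc (m - d) (m + d))) :
    ContinuousOn (fun t => φ (m + t)) (Set.Icc 0 d) :=
  hc.comp (by fun_prop) fun t ht => by constructor <;> linarith [ht.1, ht.2]

lemma continuousOn_sub_of_Icc (hc : ContinuousOn φ (Set.Icc (m - d) (m + d))) :
    ContinuousOn (fun t => φ (m - t)) (Set.Icc 0 d) :=
  hc.comp (by fun_prop) fun t ht => by constructor <;> linarith [ht.1, ht.2]

lemma hasDerivAt_add_of_Ioo (h1 : ∀ x ∈ Set.Ioo (m - d) (m + d), HasDerivAt φ (φ' x) x)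
    {t : ℝ} (ht : t ∈ Set.Ico 0 d) : HasDerivAt (fun t => φ (m + t)) (φ' (m + t)) t := by
  exact (h1 (m + t) ⟨by linarith [ht.1, ht.2], by linarith [ht.2]⟩).comp_const_add m t

lemma hasDerivAt_sub_of_Ioo (h1 : ∀ x ∈ Set.Ioo (m - d) (m + d), HasDerivAt φ (φ' x) x)
    {t : ℝ} (ht : t ∈ Set.Ico 0 d) : HasDerivAt (fun t => φ (m - t)) (-φ' (m - t)) t := by
  exact (h1 (m - t) ⟨by linarith [ht.2], by linarith [ht.1, ht.2]⟩).comp_const_sub m t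

lemma abs_symm_second_difference_le {M : ℝ} (hd : 0 ≤ d)
    (hc : ContinuousOn φ (Set.Icc (m - d) (m + d)))
    (h1 : ∀ x ∈ Set.Ioo (m - d) (m + d), HasDerivAt φ (φ' x) x)
    (h2 : ∀ x ∈ Set.Ioo (m - d) (m + d), HasDerivAt φ' (φ'' x) x)
    (hM : ∀ x ∈ Set.Ioo (m - d) (m + d), |φ'' x| ≤ M) :
    |φ (m + d) + φ (m - d) - 2 * φ m| ≤ M * d ^ 2 := by
  refine image_norm_le_of_norm_deriv_right_le_deriv_boundary
    (f := fun t => φ (m + t) + φ (m - t) - 2 * φ m) (a := 0) (b := d)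
    (f' := fun t => φ' (m + t) + -φ' (m - t)) (B := fun t => M * t ^ 2)
    (B' := fun t => M * (2 * t)) ?_ ?_ ?_ ?_ ?_ ⟨hd, le_rfl⟩
  · exact ((continuousOn_add_of_Icc hc).add (continuousOn_sub_of_Icc hc)).sub continuousOn_const
  · intro t ht
    exact (((hasDerivAt_add_of_Ioo h1 ht).add
      (hasDerivAt_sub_of_Ioo h1 ht)).sub_const _).hasDerivWithinAt
  · simp; ring_nf
  · intro t
    simpa using ((hasDerivAt_id t).pow 2).const_mul M
  · intro t ht
    have hsub : ∀ x ∈ Set.Icc (m - t) (m + t), x ∈ Set.Ioo (m - d) (m + d) := fun x hx =>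
      ⟨by linarith [hx.1, ht.2], by linarith [hx.2, ht.2]⟩
    have := (convex_Icc (m - t) (m + t)).norm_image_sub_le_of_norm_hasDerivWithin_le
      (fun x hx => (h2 x (hsub x hx)).hasDerivWithinAt) (fun x hx => hM x (hsub x hx))
      (x := m - t) (y := m + t) ⟨le_rfl, by linarith [ht.1]⟩ ⟨by linarith [ht.1], le_rfl⟩
    rw [← sub_eq_add_neg]
    refine this.trans (le_of_eq ?_)
    rw [Real.norm_eq_abs, abs_of_nonneg (by linarith [ht.1])]
    ring

lemma abs_symm_difference_sub_le_of_bound {B B' : ℝ → ℝ} (hd : 0 ≤ d)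
    (hc : ContinuousOn φ (Set.Icc (m - d) (m + d)))
    (h1 : ∀ x ∈ Set.Ioo (m - d) (m + d), HasDerivAt φ (φ' x) x)
    (hB0 : B 0 = 0) (hB : ∀ t, HasDerivAt B (B' t) t)
    (hle : ∀ t ∈ Set.Ico 0 d, |φ' (m + t) + φ' (m - t) - 2 * φ' m| ≤ B' t) :
    |φ (m + d) - φ (m - d) - 2 * d * φ' m| ≤ B d := by
  refine image_norm_le_of_norm_deriv_right_le_deriv_boundary
    (f := fun t => φ (m + t) - φ (m - t) - 2 * t * φ' m) (a := 0) (b := d)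
    (f' := fun t => φ' (m + t) - -φ' (m - t) - 2 * φ' m) (B := B)
    (B' := B') ?_ ?_ ?_ hB ?_ ⟨hd, le_rfl⟩
  · exact ((continuousOn_add_of_Icc hc).sub (continuousOn_sub_of_Icc hc)).sub (by fun_prop)
  · intro t ht
    have h3 : HasDerivAt (fun t : ℝ => 2 * t * φ' m) (2 * φ' m) t := by
      simpa using ((hasDerivAt_id t).const_mul 2).mul_const (φ' m)
    exact (((hasDerivAt_add_of_Ioo h1 ht).sub (hasDerivAt_sub_of_Ioo h1 ht)).sub
      h3).hasDerivWithinAt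
  · simp [hB0]
  · intro t ht
    rw [sub_neg_eq_add]
    exact hle t ht

lemma abs_symm_difference_sub_le {κ : ℝ} (hd : 0 < d)
    (hc : ContinuousOn φ (Set.Icc (m - d) (m + d)))
    (h1 : ∀ x ∈ Set.Ioo (m - d) (m + d), HasDerivAt φ (φ' x) x)
    (hκ : ∀ x ∈ Set.Ioo (m - d) (m + d), |φ' x| ≤ κ) :
    |φ (m + d) - φ (m - d) - 2 * d * φ' m| ≤ 4 * κ * d := by
  refine abs_symm_difference_sub_le_of_bound (B := fun t => 4 * κ * t) (B' := fun _ => 4 * κ)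
    hd.le hc h1 (by simp) (fun t => by simpa using (hasDerivAt_id t).const_mul (4 * κ)) ?_
  intro t ht
  have e1 := abs_le.1 (hκ (m + t) ⟨by linarith [ht.1], by linarith [ht.2]⟩)
  have e2 := abs_le.1 (hκ (m - t) ⟨by linarith [ht.2], by linarith [ht.1]⟩)
  have e3 := abs_le.1 (hκ m ⟨by linarith, by linarith⟩)
  rw [abs_le]; constructor <;> linarith

lemma abs_symm_third_difference_le {N : ℝ} (hd : 0 ≤ d)
    (hc : ContinuousOn φ (Set.Icc (m - d) (m + d)))
    (h1 : ∀ x ∈ Set.Ioo (m - d) (m + d), HasDerivAt φ (φ' x) x)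
    (h2 : ∀ x ∈ Set.Ioo (m - d) (m + d), HasDerivAt φ' (φ'' x) x)
    (h3 : ∀ x ∈ Set.Ioo (m - d) (m + d), HasDerivAt φ'' (φ''' x) x)
    (hN : ∀ x ∈ Set.Ioo (m - d) (m + d), |φ''' x| ≤ N) :
    |φ (m + d) - φ (m - d) - 2 * d * φ' m| ≤ N / 3 * d ^ 3 := by
  refine abs_symm_difference_sub_le_of_bound (B := fun t => N / 3 * t ^ 3)
    (B' := fun t => N * t ^ 2) hd hc h1 (by simp)
    (fun t => (((hasDerivAt_id t).pow 3).const_mul (N / 3)).congr_deriv (by simp; ring)) ?_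
  intro t ht
  have hsub : ∀ x ∈ Set.Icc (m - t) (m + t), x ∈ Set.Ioo (m - d) (m + d) := fun x hx =>
    ⟨by linarith [hx.1, ht.2], by linarith [hx.2, ht.2]⟩
  have hsub' : ∀ x ∈ Set.Ioo (m - t) (m + t), x ∈ Set.Ioo (m - d) (m + d) := fun x hx =>
    hsub x ⟨hx.1.le, hx.2.le⟩
  exact abs_symm_second_difference_le ht.1
    (fun x hx => (h2 x (hsub x hx)).continuousAt.continuousWithinAt)
    (fun x hx => h2 x (hsub' x hx)) (fun x hx => h3 x (hsub' x hx)) (fun x hx => hN x (hsub' x hx))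

end Taylor

section SteinStep

variable {g k l l' : ℝ → ℝ} {κ L B : ℝ}

lemma stein_step_pointwise
    (dg : ∀ x, 0 < x → HasDerivAt g (k x) x) (dk : ∀ x, 0 < x → HasDerivAt k (l x) x)
    (dl : ∀ x, 0 < x → HasDerivAt l (l' x) x) (hg : ContinuousOn g (Set.Ici 0))
    (hq : ContinuousOn (fun x => x * k x) (Set.Ici 0))
    (bk : ∀ x, 0 < x → |k x| ≤ κ) (bl : ∀ x, 0 < x → |l x| ≤ L)
    (bl' : ∀ x, 0 < x → |x * l' x| ≤ B)
    {ν a e D : ℝ} (hν : 0 ≤ ν) (ha : 0 ≤ a) (he : 0 < e) (hD : D ^ 2 ≤ 4 * a * e) :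
    |(ν * ((a + e + D) * k (a + e + D)) - 1 / 4 * (D * g (a + e + D)) +
        (ν * ((a + e - D) * k (a + e - D)) - 1 / 4 * (-D * g (a + e - D)))) -
      2 * (ν * ((a + e) * k (a + e)) - 1 / 4 * D ^ 2 * k (a + e))| ≤
      ν * (2 * L + B) * D ^ 2 + if a < 9 * e then κ * D ^ 2 else 3 / 16 * B * D ^ 4 / a := by
  wlog hD0 : 0 ≤ D generalizing D
  · have := this (D := -D) (by rwa [neg_sq]) (by linarith)
    rw [neg_sq, (by ring : (-D) ^ 4 = D ^ 4), ← sub_eq_add_neg, sub_neg_eq_add, neg_neg] at this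
    refine le_trans (le_of_eq ?_) this
    ring_nf
  set T := a + e with hT
  have hTpos : 0 < T := by linarith
  have hDT : D ≤ T := abs_le_of_sq_le_sq' (by nlinarith [sq_nonneg (a - e)]) hTpos.le |>.2
  have hpos : ∀ x ∈ Set.Ioo (T - D) (T + D), 0 < x := fun x hx => by linarith [hx.1]
  have hIci : Set.Icc (T - D) (T + D) ⊆ Set.Ici 0 := fun x hx => by
    simp only [Set.mem_Ici]; linarith [hx.1]
  have hqd := abs_symm_second_difference_le (φ := fun x => x * k x) (φ' := fun x => k x + x * l x)
    (φ'' := fun x => 2 * l x + x * l' x) (M := 2 * L + B) hD0 (hq.mono hIci)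
    (fun x hx => ((hasDerivAt_id x).mul (dk x (hpos x hx))).congr_deriv (by simp))
    (fun x hx => ((dk x (hpos x hx)).add ((hasDerivAt_id x).mul (dl x (hpos x hx)))).congr_deriv
      (by simp; ring))
    (fun x hx => (abs_add_le _ _).trans (by
      rw [abs_mul, abs_two]
      linarith [bl x (hpos x hx), bl' x (hpos x hx)]))
  have hgd : 1 / 4 * D * |g (T + D) - g (T - D) - 2 * D * k T| ≤
      if a < 9 * e then κ * D ^ 2 else 3 / 16 * B * D ^ 4 / a := by
    split_ifs with hae
    · rcases hD0.eq_or_lt with h0 | h0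
      · simp [← h0]
      have := abs_symm_difference_sub_le h0 (hg.mono hIci) (fun x hx => dg x (hpos x hx))
        (fun x hx => bk x (hpos x hx))
      calc 1 / 4 * D * |g (T + D) - g (T - D) - 2 * D * k T| ≤ 1 / 4 * D * (4 * κ * D) := by
            gcongr
        _ = _ := by ring
    · push Not at hae
      have ha' : 0 < a := by linarith
      have hlow : D ≤ 5 / 9 * a + e := by
        refine abs_le_of_sq_le_sq' ?_ (by positivity) |>.2
        nlinarith [mul_nonneg (sub_nonneg.2 hae) (by linarith : (0:ℝ) ≤ 25 * a - 9 * e)]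
      have := abs_symm_third_difference_le (N := B * 9 / (4 * a)) hD0 (hg.mono hIci)
        (fun x hx => dg x (hpos x hx)) (fun x hx => dk x (hpos x hx))
        (fun x hx => dl x (hpos x hx)) (fun x hx => by
          have h1 := bl' x (hpos x hx)
          rw [abs_mul, abs_of_pos (hpos x hx)] at h1
          rw [le_div_iff₀ (by positivity)]
          have h2 : 4 * a ≤ 9 * x := by linarith [hx.1]
          nlinarith [abs_nonneg (l' x)])
      calc 1 / 4 * D * |g (T + D) - g (T - D) - 2 * D * k T|
          ≤ 1 / 4 * D * (B * 9 / (4 * a) / 3 * D ^ 3) := by gcongr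
        _ = _ := by field_simp; ring
  calc _ = |ν * ((T + D) * k (T + D) + (T - D) * k (T - D) - 2 * (T * k T)) -
        1 / 4 * D * (g (T + D) - g (T - D) - 2 * D * k T)| := by ring_nf
    _ ≤ ν * |(T + D) * k (T + D) + (T - D) * k (T - D) - 2 * (T * k T)| +
        1 / 4 * D * |g (T + D) - g (T - D) - 2 * D * k T| := by
      refine (abs_sub _ _).trans (le_of_eq ?_)
      rw [abs_mul, abs_mul, abs_of_nonneg hν, abs_of_nonneg (by positivity : 0 ≤ 1 / 4 * D)]
    _ ≤ ν * ((2 * L + B) * D ^ 2) + _ :=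
      add_le_add (mul_le_mul_of_nonneg_left hqd hν) hgd
    _ = _ := by ring

/-- Averaged one-coordinate step: the symmetric increment `D` has second moment `4 a ν` and
fourth moment at most `288 a² ν²`. -/
lemma stein_step_sum {G : Type*} [Fintype G] {D : G → ℝ}
    (dg : ∀ x, 0 < x → HasDerivAt g (k x) x) (dk : ∀ x, 0 < x → HasDerivAt k (l x) x)
    (dl : ∀ x, 0 < x → HasDerivAt l (l' x) x) (hg : ContinuousOn g (Set.Ici 0))
    (hq : ContinuousOn (fun x => x * k x) (Set.Ici 0))
    (bk : ∀ x, 0 < x → |k x| ≤ κ) (bl : ∀ x, 0 < x → |l x| ≤ L)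
    (bl' : ∀ x, 0 < x → |x * l' x| ≤ B)
    {ν a e : ℝ} (hν : 0 ≤ ν) (ha : 0 ≤ a) (he : 0 < e) (hD : ∀ s, D s ^ 2 ≤ 4 * a * e)
    (hsymm : ∀ f : ℝ → ℝ, ∑ s, f (D s) = ∑ s, f (-D s))
    (hD2 : ∑ s, D s ^ 2 = Fintype.card G * (4 * a * ν))
    (hD4 : ∑ s, D s ^ 4 ≤ Fintype.card G * (288 * a ^ 2 * ν ^ 2)) :
    |∑ s, (ν * ((a + e + D s) * k (a + e + D s)) - 1 / 4 * (D s * g (a + e + D s)))| ≤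
      Fintype.card G * (19 * κ * e * ν + (4 * L + 29 * B) * a * ν ^ 2) := by
  set N : ℝ := (Fintype.card G : ℝ) with hN
  have hN0 : 0 ≤ N := Nat.cast_nonneg _
  have hκ : 0 ≤ κ := (abs_nonneg _).trans (bk 1 one_pos)
  have hL : 0 ≤ L := (abs_nonneg _).trans (bl 1 one_pos)
  have hB : 0 ≤ B := (abs_nonneg _).trans (bl' 1 one_pos)
  have hs := hsymm fun d => ν * ((a + e + d) * k (a + e + d)) - 1 / 4 * (d * g (a + e + d))
  simp only [← sub_eq_add_neg] at hs
  set S := ∑ s, (ν * ((a + e + D s) * k (a + e + D s)) - 1 / 4 * (D s * g (a + e + D s))) with hS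
  have hmain : ∑ s, 2 * (ν * ((a + e) * k (a + e)) - 1 / 4 * D s ^ 2 * k (a + e)) =
      2 * (N * (ν * e * k (a + e))) := by
    have : ∑ s, 1 / 4 * D s ^ 2 * k (a + e) = 1 / 4 * (∑ s, D s ^ 2) * k (a + e) := by
      rw [mul_sum, sum_mul]
    rw [← mul_sum, sum_sub_distrib, this, hD2, sum_const, card_univ, nsmul_eq_mul]
    ring
  have hdiff : |2 * S - 2 * (N * (ν * e * k (a + e)))| ≤
      ∑ s, (ν * (2 * L + B) * D s ^ 2 +
        if a < 9 * e then κ * D s ^ 2 else 3 / 16 * B * D s ^ 4 / a) := by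
    rw [two_mul S]
    nth_rw 2 [hs]
    rw [hS, ← hmain, ← sum_add_distrib, ← sum_sub_distrib]
    exact (abs_sum_le_sum_abs _ _).trans (sum_le_sum fun s _ =>
      stein_step_pointwise dg dk dl hg hq bk bl bl' hν ha he (hD s))
  have herr : ∑ s, (ν * (2 * L + B) * D s ^ 2 +
        if a < 9 * e then κ * D s ^ 2 else 3 / 16 * B * D s ^ 4 / a) ≤
      2 * (N * (18 * κ * e * ν + (4 * L + 29 * B) * a * ν ^ 2)) := by
    rw [sum_add_distrib, ← mul_sum, hD2]
    have hx1 : 0 ≤ N * (κ * e * ν) := by positivity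
    have hx2 : 0 ≤ N * (B * a * ν ^ 2) := by positivity
    split_ifs with hae
    · rw [← mul_sum, hD2]
      have : N * (κ * a * ν) ≤ N * (κ * (9 * e) * ν) := by gcongr
      nlinarith
    · push Not at hae
      have ha' : 0 < a := by linarith
      rw [← sum_div, ← mul_sum]
      have : 3 / 16 * B * ∑ s, D s ^ 4 ≤ 3 / 16 * B * (N * (288 * a ^ 2 * ν ^ 2)) := by gcongr
      have h2 : 3 / 16 * B * ∑ s, D s ^ 4 / a ≤ 54 * (N * (B * a * ν ^ 2)) := by
        rw [← sum_div, mul_div_assoc', div_le_iff₀ ha']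
        linarith
      rw [← sum_div, mul_div_assoc'] at h2
      nlinarith
  have hk : |N * (ν * e * k (a + e))| ≤ N * (ν * e * κ) := by
    rw [abs_mul, abs_mul, abs_of_nonneg hN0, abs_of_nonneg (by positivity : 0 ≤ ν * e)]
    have := bk (a + e) (by linarith)
    gcongr
  have h1 := abs_le.1 (hdiff.trans herr)
  have h2 := abs_le.1 hk
  rw [abs_le]
  constructor <;> linarith

end SteinStep

/-- Resampling one coordinate leaves the uniform average over a product unchanged. -/
lemma sum_sum_update {ι G : Type*} [Fintype ι] [DecidableEq ι] [Fintype G]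
    (i : ι) (Φ : (ι → G) → ℝ) :
    ∑ ω, ∑ s, Φ (Function.update ω i s) = Fintype.card G * ∑ ω, Φ ω := by
  let τ : (ι → G) × G → (ι → G) × G := fun x => (Function.update x.1 i x.2, x.1 i)
  have hτ : Function.Involutive τ := fun x => by simp [τ]
  calc ∑ ω, ∑ s, Φ (Function.update ω i s)
      = ∑ x : (ι → G) × G, Φ (Function.update x.1 i x.2) := by rw [Fintype.sum_prod_type]
    _ = ∑ x : (ι → G) × G, Φ x.1 :=
        Fintype.sum_equiv hτ.toPerm _ _ fun x => rfl
    _ = _ := by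
        rw [Fintype.sum_prod_type]
        simp [mul_sum]

/-- Moment and symmetry properties of a random vector `u`, uniform over a finite index type:
it is symmetric, has constant squared length `e`, and on the hyperplane of centred vectors has
covariance `ν` times the identity and controlled fourth moments. -/
structure IsSymmetricStep {G ι : Type*} [Fintype G] [Fintype ι] (u : G → ι → ℝ)
    (e ν : ℝ) : Prop where
  sum_eq_zero : ∀ s, ∑ j, u s j = 0
  sum_sq : ∀ s, ∑ j, u s j ^ 2 = e
  symm : ∀ f : (ι → ℝ) → ℝ, ∑ s, f (u s) = ∑ s, f (-u s)
  second : ∀ w : ι → ℝ, ∑ j, w j = 0 →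
    ∑ s, (∑ j, w j * u s j) ^ 2 = Fintype.card G * (ν * ∑ j, w j ^ 2)
  fourth : ∀ w : ι → ℝ, ∑ j, w j = 0 →
    ∑ s, (∑ j, w j * u s j) ^ 4 ≤ Fintype.card G * (18 * ν ^ 2 * (∑ j, w j ^ 2) ^ 2)

section Product

variable {G ι : Type*} {n : ℕ} {u : G → ι → ℝ}

/-- Sum of all steps but the `i`-th one. -/
def leaveOneOut (u : G → ι → ℝ) (i : Fin n) (ω : Fin n → G) (j : ι) : ℝ :=
  ∑ i' ∈ univ.erase i, u (ω i') j

lemma leaveOneOut_update (i : Fin n) (ω : Fin n → G) (s : G) :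
    leaveOneOut u i (Function.update ω i s) = leaveOneOut u i ω := by
  funext j
  refine sum_congr rfl fun i' hi' => ?_
  rw [Function.update_of_ne (ne_of_mem_erase hi')]

lemma sum_eq_leaveOneOut_add (i : Fin n) (ω : Fin n → G) (j : ι) :
    ∑ i', u (ω i') j = leaveOneOut u i ω j + u (ω i) j := by
  rw [leaveOneOut, sum_erase_add _ _ (mem_univ i)]

variable [Fintype ι]

/-- Squared length of the sum of all steps. -/
def sumSqLength (u : G → ι → ℝ) (ω : Fin n → G) : ℝ := ∑ j, (∑ i, u (ω i) j) ^ 2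

/-- The increment contributed by the `i`-th step to the squared length. -/
def increment (u : G → ι → ℝ) (i : Fin n) (ω : Fin n → G) : ℝ :=
  2 * ∑ j, leaveOneOut u i ω j * u (ω i) j

lemma increment_update (i : Fin n) (ω : Fin n → G) (s : G) :
    increment u i (Function.update ω i s) = 2 * ∑ j, leaveOneOut u i ω j * u s j := by
  rw [increment, leaveOneOut_update, Function.update_self]

variable [Fintype G] {e ν : ℝ}

lemma sum_leaveOneOut (hu : IsSymmetricStep u e ν) (i : Fin n) (ω : Fin n → G) :
    ∑ j, leaveOneOut u i ω j = 0 := by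
  unfold leaveOneOut
  rw [sum_comm]
  exact sum_eq_zero fun i' _ => hu.sum_eq_zero _

lemma sumSqLength_eq (hu : IsSymmetricStep u e ν) (i : Fin n) (ω : Fin n → G) :
    sumSqLength u ω = ∑ j, leaveOneOut u i ω j ^ 2 + e + increment u i ω := by
  rw [increment, ← hu.sum_sq (ω i), mul_sum, ← sum_add_distrib, ← sum_add_distrib]
  refine sum_congr rfl fun j _ => ?_
  rw [sum_eq_leaveOneOut_add i]
  ring

lemma sumSqLength_eq_sum_increment (hu : IsSymmetricStep u e ν) (ω : Fin n → G) :
    sumSqLength u ω = n * e + 1 / 2 * ∑ i, increment u i ω := by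
  have h1 : sumSqLength u ω = ∑ i : Fin n, ∑ j, (∑ i', u (ω i') j) * u (ω i) j := by
    rw [sum_comm]
    refine sum_congr rfl fun j _ => ?_
    rw [← mul_sum, sq]
  have h2 : ∀ i : Fin n, ∑ j, (∑ i', u (ω i') j) * u (ω i) j = e + 1 / 2 * increment u i ω := by
    intro i
    rw [increment, ← hu.sum_sq (ω i), ← mul_assoc, (by norm_num : (1 / 2 * 2 : ℝ) = 1), one_mul,
      ← sum_add_distrib]
    refine sum_congr rfl fun j _ => ?_
    rw [sum_eq_leaveOneOut_add i]
    ring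
  rw [h1, sum_congr rfl fun i _ => h2 i, sum_add_distrib, ← mul_sum]
  simp

lemma increment_symm (hu : IsSymmetricStep u e ν) (w : ι → ℝ) (f : ℝ → ℝ) :
    ∑ s, f (2 * ∑ j, w j * u s j) = ∑ s, f (-(2 * ∑ j, w j * u s j)) := by
  rw [hu.symm fun x => f (2 * ∑ j, w j * x j)]
  simp

lemma sum_increment [Nonempty G] (hu : IsSymmetricStep u e ν) (i : Fin n) :
    ∑ ω : Fin n → G, increment u i ω = 0 := by
  have h := sum_sum_update i (increment u i)
  have h0 : ∀ ω : Fin n → G, ∑ s, increment u i (Function.update ω i s) = 0 := by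
    intro ω
    simp only [increment_update]
    have := increment_symm hu (leaveOneOut u i ω) id
    simp only [id, sum_neg_distrib] at this
    linarith
  rw [sum_eq_zero fun ω _ => h0 ω] at h
  have : (Fintype.card G : ℝ) ≠ 0 := by positivity
  rcases mul_eq_zero.1 h.symm with h | h
  · exact absurd h this
  · exact h

lemma sum_sq_leaveOneOut [Nonempty G] (hu : IsSymmetricStep u e ν) (i : Fin n) :
    ∑ ω : Fin n → G, ∑ j, leaveOneOut u i ω j ^ 2 =
      Fintype.card (Fin n → G) * ((n - 1) * e) := by
  have h1 : ∑ ω : Fin n → G, sumSqLength u ω = Fintype.card (Fin n → G) * (n * e) := by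
    have h0 : ∑ ω : Fin n → G, 1 / 2 * ∑ i, increment u i ω = 0 := by
      rw [← mul_sum, sum_comm, sum_eq_zero fun i _ => sum_increment hu i, mul_zero]
    rw [sum_congr rfl fun ω _ => sumSqLength_eq_sum_increment hu ω, sum_add_distrib, h0,
      sum_const, card_univ, nsmul_eq_mul, add_zero]
  rw [sum_congr rfl fun ω _ => sumSqLength_eq hu i ω, sum_add_distrib, sum_increment hu,
    sum_add_distrib, sum_const, card_univ, nsmul_eq_mul] at h1
  linarith

/-- Stein's method for the squared length of a sum of independent symmetric steps. -/
lemma abs_sum_stein_le [Nonempty G] (hu : IsSymmetricStep u e ν) (he : 0 < e) (hν : 0 ≤ ν)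
    (hn : n * ν = 1) {g k l l' : ℝ → ℝ} {κ L B : ℝ}
    (dg : ∀ x, 0 < x → HasDerivAt g (k x) x) (dk : ∀ x, 0 < x → HasDerivAt k (l x) x)
    (dl : ∀ x, 0 < x → HasDerivAt l (l' x) x) (hg : ContinuousOn g (Set.Ici 0))
    (hq : ContinuousOn (fun x => x * k x) (Set.Ici 0))
    (bk : ∀ x, 0 < x → |k x| ≤ κ) (bl : ∀ x, 0 < x → |l x| ≤ L)
    (bl' : ∀ x, 0 < x → |x * l' x| ≤ B) :
    |∑ ω : Fin n → G, (sumSqLength u ω * k (sumSqLength u ω) +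
        (n * e / 2 - sumSqLength u ω / 2) * g (sumSqLength u ω))| ≤
      Fintype.card (Fin n → G) * (e * (19 * κ + (4 * L + 29 * B))) := by
  have hL : 0 ≤ L := (abs_nonneg _).trans (bl 1 one_pos)
  have hB : 0 ≤ B := (abs_nonneg _).trans (bl' 1 one_pos)
  let Ψ : Fin n → (Fin n → G) → ℝ := fun i ω =>
    ν * (sumSqLength u ω * k (sumSqLength u ω)) - 1 / 4 * (increment u i ω * g (sumSqLength u ω))
  have hsplit : ∀ ω : Fin n → G, sumSqLength u ω * k (sumSqLength u ω) +
      (n * e / 2 - sumSqLength u ω / 2) * g (sumSqLength u ω) = ∑ i, Ψ i ω := by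
    intro ω
    simp only [Ψ]
    have e1 := sumSqLength_eq_sum_increment hu ω
    have e2 : ∑ i, 1 / 4 * (increment u i ω * g (sumSqLength u ω)) =
        1 / 4 * ((∑ i, increment u i ω) * g (sumSqLength u ω)) := by rw [← mul_sum, sum_mul]
    rw [sum_sub_distrib, e2, sum_const, card_univ, Fintype.card_fin, nsmul_eq_mul]
    linear_combination (-(1 / 2) * g (sumSqLength u ω)) * e1 -
      (sumSqLength u ω * k (sumSqLength u ω)) * hn
  have hG : (0 : ℝ) < Fintype.card G := by positivity
  have hstep : ∀ i, |∑ ω, Ψ i ω| ≤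
      Fintype.card (Fin n → G) * (ν * (e * (19 * κ + (4 * L + 29 * B)))) := by
    intro i
    refine le_of_mul_le_mul_left ?_ hG
    rw [← abs_of_pos hG, ← abs_mul, abs_of_pos hG, ← sum_sum_update i (Ψ i)]
    calc |∑ ω, ∑ s, Ψ i (Function.update ω i s)|
        ≤ ∑ ω : Fin n → G, Fintype.card G * (19 * κ * e * ν +
          (4 * L + 29 * B) * (∑ j, leaveOneOut u i ω j ^ 2) * ν ^ 2) := by
          refine (abs_sum_le_sum_abs _ _).trans (sum_le_sum fun ω _ => ?_)
          have hw := sum_leaveOneOut hu i ω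
          have h := stein_step_sum (D := fun s => 2 * ∑ j, leaveOneOut u i ω j * u s j)
            dg dk dl hg hq bk bl bl' hν
            (sum_nonneg fun j _ => sq_nonneg (leaveOneOut u i ω j)) he
            (fun s => by
              have := sum_mul_sq_le_sq_mul_sq univ (leaveOneOut u i ω) (u s)
              rw [hu.sum_sq] at this
              rw [mul_pow]
              linarith)
            (increment_symm hu _)
            (by
              simp only [mul_pow]
              rw [← mul_sum, hu.second _ hw]
              ring)
            (by
              simp only [mul_pow]
              rw [← mul_sum]
              have := hu.fourth _ hw
              linarith)
          refine le_trans (le_of_eq ?_) h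
          congr 1
          refine sum_congr rfl fun s _ => ?_
          simp only [Ψ]
          rw [sumSqLength_eq hu i, increment_update, leaveOneOut_update]
      _ = Fintype.card G * (Fintype.card (Fin n → G) * (19 * κ * e * ν +
          (4 * L + 29 * B) * ((n - 1) * e) * ν ^ 2)) := by
          have e1 : ∑ ω : Fin n → G, (4 * L + 29 * B) * (∑ j, leaveOneOut u i ω j ^ 2) * ν ^ 2 =
              (4 * L + 29 * B) * (∑ ω : Fin n → G, ∑ j, leaveOneOut u i ω j ^ 2) * ν ^ 2 := by
            rw [mul_sum, sum_mul]
          rw [← mul_sum, sum_add_distrib, e1, sum_sq_leaveOneOut hu, sum_const, card_univ,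
            nsmul_eq_mul]
          ring
      _ ≤ _ := by
          refine mul_le_mul_of_nonneg_left (mul_le_mul_of_nonneg_left ?_ (by positivity)) hG.le
          have e1 : (4 * L + 29 * B) * ((n - 1) * e) * ν ^ 2 =
              (4 * L + 29 * B) * e * ν * (n * ν) - (4 * L + 29 * B) * e * ν ^ 2 := by ring
          rw [e1, hn]
          have : 0 ≤ (4 * L + 29 * B) * e * ν ^ 2 := by positivity
          linarith
  rw [sum_congr rfl fun ω _ => hsplit ω, sum_comm]
  refine (abs_sum_le_sum_abs _ _).trans ((sum_le_sum fun i _ => hstep i).trans (le_of_eq ?_))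
  rw [sum_const, card_univ, Fintype.card_fin, nsmul_eq_mul]
  linear_combination (Fintype.card (Fin n → G) * (e * (19 * κ + (4 * L + 29 * B)))) * hn

end Product

section PermutationSums

variable {ι : Type*}

/-- The decrease of `permSum w x σ` under the transposition of `I` and `J`. -/
def swapDiff (w x : ι → ℝ) (I J : ι) (σ : Equiv.Perm ι) : ℝ := (w I - w J) * (x (σ I) - x (σ J))

lemma swapDiff_mul_swap [DecidableEq ι] (w x : ι → ℝ) (I J : ι) (σ : Equiv.Perm ι) :
    swapDiff w x I J (σ * Equiv.swap I J) = -swapDiff w x I J σ := by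
  simp only [swapDiff, Equiv.Perm.mul_apply, Equiv.swap_apply_left, Equiv.swap_apply_right]
  ring

variable [Fintype ι]

/-- The linear rank statistic with weights `w` and scores `x`. -/
def permSum (w x : ι → ℝ) (σ : Equiv.Perm ι) : ℝ := ∑ j, w j * x (σ j)

lemma sum_swapDiff {w x : ι → ℝ} (hw : ∑ j, w j = 0) (σ : Equiv.Perm ι) :
    ∑ I, ∑ J, swapDiff w x I J σ = 2 * Fintype.card ι * permSum w x σ := by
  have h : ∀ I J, swapDiff w x I J σ =
      w I * x (σ I) + w J * x (σ J) - (w I * x (σ J) + w J * x (σ I)) := by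
    intro I J
    rw [swapDiff]
    ring
  simp only [h, sum_sub_distrib, sum_add_distrib, ← mul_sum, ← sum_mul, hw, sum_const, card_univ,
    nsmul_eq_mul]
  have h' : ∑ j, w j * (Fintype.card ι * x (σ j)) = Fintype.card ι * permSum w x σ := by
    rw [permSum, mul_sum]
    exact sum_congr rfl fun j _ => by ring
  rw [← permSum, h']
  ring

lemma sum_sub_sq {w : ι → ℝ} (hw : ∑ j, w j = 0) :
    ∑ I, ∑ J, (w I - w J) ^ 2 = 2 * Fintype.card ι * ∑ j, w j ^ 2 := by
  have h : ∀ I J, (w I - w J) ^ 2 = w I ^ 2 + w J ^ 2 - 2 * w I * w J := by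
    intro I J
    ring
  simp only [h, sum_sub_distrib, sum_add_distrib, ← mul_sum, hw, sum_const, card_univ,
    nsmul_eq_mul, mul_zero]
  ring

variable [DecidableEq ι]

lemma permSum_mul_swap (w x : ι → ℝ) (I J : ι) (σ : Equiv.Perm ι) :
    permSum w x (σ * Equiv.swap I J) = permSum w x σ - swapDiff w x I J σ := by
  have h1 : permSum w x (σ * Equiv.swap I J) = ∑ j, w (Equiv.swap I J j) * x (σ j) := by
    rw [permSum, ← Equiv.sum_comp (Equiv.swap I J)]
    simp
  rcases eq_or_ne I J with rfl | hIJ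
  · simp [swapDiff, permSum]
  have h2 : ∀ j, j ∉ ({I, J} : Finset ι) →
      w (Equiv.swap I J j) * x (σ j) - w j * x (σ j) = 0 := by
    intro j hj
    simp only [mem_insert, mem_singleton, not_or] at hj
    rw [Equiv.swap_apply_of_ne_of_ne hj.1 hj.2, sub_self]
  have h3 := sum_subset (subset_univ ({I, J} : Finset ι)) fun j _ hj => h2 j hj
  rw [sum_pair hIJ, sum_sub_distrib, Equiv.swap_apply_left, Equiv.swap_apply_right, ← h1] at h3
  rw [swapDiff]
  change _ = ∑ j, w j * x (σ j) - _
  linear_combination -h3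

/-- Exchangeability of a random permutation and its composition with a transposition. -/
lemma sum_swapDiff_mul (w x : ι → ℝ) (I J : ι) (f : ℝ → ℝ) :
    2 * ∑ σ, swapDiff w x I J σ * f (permSum w x σ) =
      ∑ σ, swapDiff w x I J σ *
        (f (permSum w x σ) - f (permSum w x σ - swapDiff w x I J σ)) := by
  have h := Equiv.sum_comp (Equiv.mulRight (Equiv.swap I J))
    fun σ => swapDiff w x I J σ * f (permSum w x σ)
  simp only [Equiv.coe_mulRight, swapDiff_mul_swap, permSum_mul_swap, neg_mul,
    sum_neg_distrib] at h
  simp only [mul_sub, sum_sub_distrib]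
  linarith

/-- The averaged squared difference of the scores at two places does not depend on the places. -/
lemma sum_score_sub_sq (x : ι → ℝ) {I J I' J' : ι} (h : I ≠ J) (h' : I' ≠ J') :
    ∑ σ : Equiv.Perm ι, (x (σ I) - x (σ J)) ^ 2 =
      ∑ σ : Equiv.Perm ι, (x (σ I') - x (σ J')) ^ 2 := by
  obtain ⟨τ, hI, hJ⟩ : ∃ τ : Equiv.Perm ι, τ I = I' ∧ τ J = J' := by
    refine ⟨Equiv.swap (Equiv.swap I I' J) J' * Equiv.swap I I', ?_, by simp⟩
    rw [Equiv.Perm.mul_apply, Equiv.swap_apply_left]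
    refine Equiv.swap_apply_of_ne_of_ne (fun hc => h ?_) h'
    exact (Equiv.swap I I').injective (by rw [Equiv.swap_apply_left, ← hc])
  rw [← Equiv.sum_comp (Equiv.mulRight τ)]
  simp [hI, hJ]

lemma sum_permSum_sq {w x : ι → ℝ} (hw : ∑ j, w j = 0) (hx : ∑ j, x j = 0)
    (hι : 2 ≤ Fintype.card ι) :
    (Fintype.card ι - 1 : ℝ) * ∑ σ, permSum w x σ ^ 2 =
      Fintype.card (Equiv.Perm ι) * (∑ j, x j ^ 2) * ∑ j, w j ^ 2 := by
  have hr : (0 : ℝ) < Fintype.card ι := by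
    have : 0 < Fintype.card ι := by omega
    exact_mod_cast this
  obtain ⟨I₀, J₀, h₀⟩ := Fintype.one_lt_card_iff.1 (show 1 < Fintype.card ι by omega)
  set c := ∑ σ : Equiv.Perm ι, (x (σ I₀) - x (σ J₀)) ^ 2 with hc
  have hconst : ∀ v : ι → ι → ℝ, (∀ I, v I I = 0) → ∀ I J,
      v I J * ∑ σ : Equiv.Perm ι, (x (σ I) - x (σ J)) ^ 2 = v I J * c := by
    intro v hv I J
    rcases eq_or_ne I J with rfl | hIJ
    · simp [hv]
    · rw [sum_score_sub_sq x hIJ h₀]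
  have h1 : Fintype.card ι * (Fintype.card ι - 1) * c =
      Fintype.card (Equiv.Perm ι) * (2 * Fintype.card ι * ∑ j, x j ^ 2) := by
    have e1 : ∑ I : ι, ∑ J : ι, ∑ σ : Equiv.Perm ι, (x (σ I) - x (σ J)) ^ 2 =
        Fintype.card (Equiv.Perm ι) * (2 * Fintype.card ι * ∑ j, x j ^ 2) := by
      have : ∀ I : ι, ∑ J : ι, ∑ σ : Equiv.Perm ι, (x (σ I) - x (σ J)) ^ 2 =
          ∑ σ : Equiv.Perm ι, ∑ J : ι, (x (σ I) - x (σ J)) ^ 2 := fun I => sum_comm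
      rw [sum_congr rfl fun I _ => this I, sum_comm, sum_congr rfl fun σ _ => ?_, sum_const,
        card_univ, nsmul_eq_mul]
      rw [← sum_sub_sq hx, ← Equiv.sum_comp σ fun I => ∑ J, (x I - x J) ^ 2]
      exact sum_congr rfl fun I _ => Equiv.sum_comp σ fun J => (x (σ I) - x J) ^ 2
    have e2 : ∀ I J : ι, ∑ σ : Equiv.Perm ι, (x (σ I) - x (σ J)) ^ 2 =
        (1 - if I = J then 1 else 0) * c := by
      intro I J
      rw [← hconst (fun I J => 1 - if I = J then 1 else 0) (by simp)]
      by_cases hIJ : I = J <;> simp [hIJ]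
    simp only [e2, ← sum_mul, sum_sub_distrib] at e1
    rw [← e1]
    simp only [sum_const, card_univ, nsmul_eq_mul, sum_ite_eq, mem_univ, if_true]
    ring
  have h2 : 4 * Fintype.card ι * ∑ σ, permSum w x σ ^ 2 =
      2 * Fintype.card ι * (∑ j, w j ^ 2) * c := by
    have e1 : ∀ I J, 2 * ∑ σ, swapDiff w x I J σ * permSum w x σ = (w I - w J) ^ 2 * c := by
      intro I J
      rw [sum_swapDiff_mul w x I J fun y => y, ← hconst (fun I J => (w I - w J) ^ 2) (by simp),
        mul_sum]
      refine sum_congr rfl fun σ _ => ?_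
      rw [swapDiff]
      ring
    rw [← sum_sub_sq hw, sum_mul]
    simp only [sum_mul, ← e1]
    simp only [← mul_sum]
    have e2 : ∀ I : ι, ∑ J, ∑ σ, swapDiff w x I J σ * permSum w x σ =
        ∑ σ, ∑ J, swapDiff w x I J σ * permSum w x σ := fun I => sum_comm
    rw [sum_congr rfl fun I _ => e2 I, sum_comm, mul_sum, mul_sum]
    refine sum_congr rfl fun σ _ => ?_
    simp only [← sum_mul]
    rw [sum_swapDiff hw]
    ring
  have h3 : (4 * Fintype.card ι ^ 2 : ℝ) * ((Fintype.card ι - 1 : ℝ) * ∑ σ, permSum w x σ ^ 2) =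
      (4 * Fintype.card ι ^ 2 : ℝ) *
        (Fintype.card (Equiv.Perm ι) * (∑ j, x j ^ 2) * ∑ j, w j ^ 2) := by
    linear_combination (Fintype.card ι * (Fintype.card ι - 1 : ℝ)) * h2 +
      2 * Fintype.card ι * (∑ j, w j ^ 2) * h1
  exact mul_left_cancel₀ (by positivity) h3

lemma sum_permSum_pow_four_le {w x : ι → ℝ} {D : ℝ} (hw : ∑ j, w j = 0) [Nonempty ι]
    (hD : ∀ i j, (x i - x j) ^ 2 ≤ D) :
    ∑ σ, permSum w x σ ^ 4 ≤ 3 / 2 * D * (∑ j, w j ^ 2) * ∑ σ, permSum w x σ ^ 2 := by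
  have hr : (0 : ℝ) < Fintype.card ι := by positivity
  have h1 : ∀ I J, 2 * ∑ σ, swapDiff w x I J σ * permSum w x σ ^ 3 ≤
      3 * ∑ σ, (w I - w J) ^ 2 * (D * permSum w x σ ^ 2) := by
    intro I J
    have hsymm := Equiv.sum_comp (Equiv.mulRight (Equiv.swap I J))
      fun σ => swapDiff w x I J σ ^ 2 * permSum w x σ ^ 2
    simp only [Equiv.coe_mulRight, swapDiff_mul_swap, permSum_mul_swap, neg_sq] at hsymm
    have hle : ∑ σ, swapDiff w x I J σ *
        (permSum w x σ ^ 3 - (permSum w x σ - swapDiff w x I J σ) ^ 3) ≤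
        ∑ σ, 3 / 2 * (swapDiff w x I J σ ^ 2 * permSum w x σ ^ 2 +
          swapDiff w x I J σ ^ 2 * (permSum w x σ - swapDiff w x I J σ) ^ 2) := by
      refine sum_le_sum fun σ _ => ?_
      nlinarith [sq_nonneg (swapDiff w x I J σ ^ 2)]
    rw [← mul_sum, sum_add_distrib, hsymm] at hle
    have hb : ∑ σ, swapDiff w x I J σ ^ 2 * permSum w x σ ^ 2 ≤
        ∑ σ, (w I - w J) ^ 2 * (D * permSum w x σ ^ 2) := by
      refine sum_le_sum fun σ _ => ?_
      rw [swapDiff, mul_pow, mul_assoc]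
      gcongr
      exact hD _ _
    rw [sum_swapDiff_mul w x I J fun y => y ^ 3]
    linarith
  have h2 := sum_le_sum fun I (_ : I ∈ univ) => sum_le_sum fun J (_ : J ∈ univ) => h1 I J
  have e1 : ∑ I, ∑ J, 2 * ∑ σ, swapDiff w x I J σ * permSum w x σ ^ 3 =
      4 * Fintype.card ι * ∑ σ, permSum w x σ ^ 4 := by
    have e2 : ∀ I : ι, ∑ J, ∑ σ, swapDiff w x I J σ * permSum w x σ ^ 3 =
        ∑ σ, ∑ J, swapDiff w x I J σ * permSum w x σ ^ 3 := fun I => sum_comm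
    simp only [← mul_sum]
    rw [sum_congr rfl fun I _ => e2 I, sum_comm, mul_sum, mul_sum]
    refine sum_congr rfl fun σ _ => ?_
    simp only [← sum_mul]
    rw [sum_swapDiff hw]
    ring
  have e3 : ∑ I, ∑ J, 3 * ∑ σ, (w I - w J) ^ 2 * (D * permSum w x σ ^ 2) =
      6 * Fintype.card ι * (∑ j, w j ^ 2) * (D * ∑ σ, permSum w x σ ^ 2) := by
    simp only [← mul_sum, ← sum_mul]
    rw [sum_sub_sq hw]
    ring
  rw [e1, e3] at h2
  refine le_of_mul_le_mul_left (h2.trans (le_of_eq ?_))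
    (by positivity : (0 : ℝ) < 4 * Fintype.card ι)
  ring

end PermutationSums

/-- The centred rank `j + 1 - (r + 1) / 2`. -/
noncomputable def centredRank (r : ℕ) (j : Fin r) : ℝ := (j : ℕ) + 1 - ((r : ℝ) + 1) / 2

lemma sum_centredRank (r : ℕ) : ∑ j, centredRank r j = 0 := by
  have h : ∀ m : ℕ, ∑ j ∈ range m, ((j : ℝ) + 1) = m * (m + 1) / 2 := by
    intro m
    induction m with
    | zero => simp
    | succ m ih =>
      rw [sum_range_succ, ih]
      push_cast
      ring
  simp only [centredRank, sum_sub_distrib, sum_const, card_univ, Fintype.card_fin, nsmul_eq_mul]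
  rw [Fin.sum_univ_eq_sum_range (fun j => (j : ℝ) + 1) r, h]
  ring

lemma sum_centredRank_sq (r : ℕ) :
    ∑ j, centredRank r j ^ 2 = r * (r ^ 2 - 1) / 12 := by
  have h : ∀ (m : ℕ) (a : ℝ), ∑ j ∈ range m, ((j : ℝ) + 1 - a) ^ 2 =
      m * (m + 1) * (2 * m + 1) / 6 - a * (m * (m + 1)) + m * a ^ 2 := by
    intro m a
    induction m with
    | zero => simp
    | succ m ih =>
      rw [sum_range_succ, ih]
      push_cast
      ring
  simp only [centredRank]
  rw [Fin.sum_univ_eq_sum_range (fun j => ((j : ℝ) + 1 - ((r : ℝ) + 1) / 2) ^ 2) r, h]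
  ring

lemma centredRank_rev {r : ℕ} (j : Fin r) : centredRank r (Fin.rev j) = -centredRank r j := by
  have h : (j : ℕ) + 1 ≤ r := j.2
  rw [centredRank, centredRank, Fin.val_rev, Nat.cast_sub h]
  push_cast
  ring

lemma centredRank_sub_sq_le {r : ℕ} (i j : Fin r) :
    (centredRank r i - centredRank r j) ^ 2 ≤ ((r : ℝ) - 1) ^ 2 := by
  have hi : ((i : ℕ) : ℝ) + 1 ≤ r := by exact_mod_cast i.2
  have hj : ((j : ℕ) : ℝ) + 1 ≤ r := by exact_mod_cast j.2
  have hi0 : (0 : ℝ) ≤ (i : ℕ) := Nat.cast_nonneg _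
  have hj0 : (0 : ℝ) ≤ (j : ℕ) := Nat.cast_nonneg _
  rw [centredRank, centredRank]
  exact sq_le_sq' (by linarith) (by linarith)

/-- The contribution of a single ranking to the vector of normalized rank sums. -/
noncomputable def rankStep (n r : ℕ) (σ : Equiv.Perm (Fin r)) (j : Fin r) : ℝ :=
  √12 / √((r : ℝ) * ((r : ℝ) + 1) * (n : ℝ)) * centredRank r (σ j)

lemma isSymmetricStep_rankStep {n r : ℕ} (hn : 1 ≤ n) (hr : 2 ≤ r) :
    IsSymmetricStep (rankStep n r) (((r : ℝ) - 1) / n) (1 / n) := by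
  have hn' : (0 : ℝ) < n := by exact_mod_cast hn
  have hr' : (2 : ℝ) ≤ r := by exact_mod_cast hr
  have : Nonempty (Fin r) := ⟨⟨0, by omega⟩⟩
  have hc : (√12 / √((r : ℝ) * ((r : ℝ) + 1) * (n : ℝ))) ^ 2 * (r * (r + 1) * n) = 12 := by
    have h0 : (0 : ℝ) < (r : ℝ) * ((r : ℝ) + 1) * (n : ℝ) := by positivity
    rw [div_pow, sq_sqrt (by norm_num), sq_sqrt h0.le, div_mul_cancel₀ _ h0.ne']
  have hM : ∀ (w : Fin r → ℝ) (σ : Equiv.Perm (Fin r)), ∑ j, w j * rankStep n r σ j =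
      √12 / √((r : ℝ) * ((r : ℝ) + 1) * (n : ℝ)) * permSum w (centredRank r) σ := by
    intro w σ
    rw [permSum, mul_sum]
    refine sum_congr rfl fun j _ => ?_
    rw [rankStep]
    ring
  simp only [rankStep] at hM
  set c := √12 / √((r : ℝ) * ((r : ℝ) + 1) * (n : ℝ)) with hcdef
  have hc' : c ^ 2 = 12 / (r * (r + 1) * n) := by rw [eq_div_iff (by positivity), hc]
  have hsecond : ∀ w : Fin r → ℝ, ∑ j, w j = 0 → ∑ σ, permSum w (centredRank r) σ ^ 2 =
      Fintype.card (Equiv.Perm (Fin r)) * (r * (r + 1) / 12) * ∑ j, w j ^ 2 := by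
    intro w hw
    have h := sum_permSum_sq hw (sum_centredRank r) (by simpa using hr)
    rw [sum_centredRank_sq, Fintype.card_fin] at h
    refine mul_left_cancel₀ (by linarith : (r : ℝ) - 1 ≠ 0) (h.trans ?_)
    ring
  constructor
  · intro σ
    simp only [rankStep]
    rw [← mul_sum, Equiv.sum_comp σ (centredRank r), sum_centredRank, mul_zero]
  · intro σ
    simp only [rankStep, mul_pow, ← hcdef]
    rw [← mul_sum, Equiv.sum_comp σ fun j => centredRank r j ^ 2, sum_centredRank_sq,
      eq_div_iff hn'.ne']
    linear_combination ((r : ℝ) - 1) / 12 * hc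
  · intro f
    rw [← Equiv.sum_comp (Equiv.mulLeft Fin.revPerm)]
    refine sum_congr rfl fun σ _ => congrArg f (funext fun j => ?_)
    simp [rankStep, centredRank_rev]
  · intro w hw
    simp only [rankStep, ← hcdef, hM, mul_pow]
    rw [← mul_sum, hsecond w hw, hc']
    field_simp
  · intro w hw
    simp only [rankStep, ← hcdef, hM, mul_pow]
    rw [← mul_sum]
    have h := sum_permSum_pow_four_le hw (fun i j => centredRank_sub_sq_le (r := r) i j)
    rw [hsecond w hw] at h
    have h2 : ((r : ℝ) - 1) ^ 2 ≤ r * (r + 1) := by nlinarith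
    set N : ℝ := (Fintype.card (Equiv.Perm (Fin r)) : ℝ)
    set W := ∑ j, w j ^ 2
    calc c ^ 4 * ∑ σ, permSum w (centredRank r) σ ^ 4
        ≤ (c ^ 2) ^ 2 * (3 / 2 * (r - 1) ^ 2 * W * (N * (r * (r + 1) / 12) * W)) := by
          rw [← pow_mul]
          gcongr
      _ ≤ (c ^ 2) ^ 2 * (3 / 2 * (r * (r + 1)) * W * (N * (r * (r + 1) / 12) * W)) := by
          gcongr
      _ = N * (18 * (1 / n) ^ 2 * W ^ 2) := by
          rw [hc']
          field_simp
          ring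

lemma friedman_eq_sumSqLength (n r : ℕ) (ω : Fin n → Equiv.Perm (Fin r)) :
    friedman n r ω = sumSqLength (rankStep n r) ω := by
  simp only [friedman, sumSqLength, Sstat, rho, rankStep, centredRank, mul_sum]

lemma integral_friedmanMeasure (n r : ℕ) (f : (Fin n → Equiv.Perm (Fin r)) → ℝ) :
    Fintype.card (Fin n → Equiv.Perm (Fin r)) * ∫ ω, f ω ∂(friedmanMeasure n r) = ∑ ω, f ω := by
  have : DiscreteMeasurableSpace (Equiv.Perm (Fin r)) := ⟨fun _ => trivial⟩
  rw [friedmanMeasure, PMF.integral_eq_sum, mul_sum]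
  refine sum_congr rfl fun ω _ => ?_
  have : (Fintype.card (Fin n → Equiv.Perm (Fin r)) : ℝ) ≠ 0 := by positivity
  rw [PMF.uniformOfFintype_apply, ENNReal.toReal_inv, ENNReal.toReal_natCast, smul_eq_mul,
    mul_inv_cancel_left₀ this]

/-- **Theorem 1 (Gaunt–Reinert).** For `n ≥ 1`, `r ≥ 2` and `h ∈ C_b^{1,3}(ℝ⁺)`
(three times differentiable on `[0,∞)` with bounded first, second and third derivatives),
`|E[h(F_r)] − χ²_{(r−1)}h| ≤ (r/n)[293‖h'‖ + (2269 + 431r/n)‖h''‖ + (3533 + 646r/n)‖h'''‖]`. -/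
theorem friedman_chiSq_smooth_test_function_bound
    (n r : ℕ) (hn : 1 ≤ n) (hr : 2 ≤ r)
    (h h' h'' h''' : ℝ → ℝ)
    (hd1 : ∀ x ∈ Set.Ici (0 : ℝ), HasDerivAt h (h' x) x)
    (hd2 : ∀ x ∈ Set.Ici (0 : ℝ), HasDerivAt h' (h'' x) x)
    (hd3 : ∀ x ∈ Set.Ici (0 : ℝ), HasDerivAt h'' (h''' x) x)
    (C1 C2 C3 : ℝ)
    (hb1 : ∀ x ∈ Set.Ici (0 : ℝ), |h' x| ≤ C1)
    (hb2 : ∀ x ∈ Set.Ici (0 : ℝ), |h'' x| ≤ C2)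
    (hb3 : ∀ x ∈ Set.Ici (0 : ℝ), |h''' x| ≤ C3) :
    |(∫ ω, h (friedman n r ω) ∂(friedmanMeasure n r)) - ∫ x, h x ∂(chiSq (r - 1))|
      ≤ (r : ℝ) / n *
        (293 * C1 + (2269 + 431 * r / n) * C2 + (3533 + 646 * r / n) * C3) := by
  have hn' : (0 : ℝ) < n := by exact_mod_cast hn
  have hr' : (2 : ℝ) ≤ r := by exact_mod_cast hr
  have hC1 : 0 ≤ C1 := (abs_nonneg _).trans (hb1 0 Set.self_mem_Ici)
  have hC2 : 0 ≤ C2 := (abs_nonneg _).trans (hb2 0 Set.self_mem_Ici)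
  have hC3 : 0 ≤ C3 := (abs_nonneg _).trans (hb3 0 Set.self_mem_Ici)
  obtain ⟨g, k, l, l', dg, dk, dl, hg, hS, bk, bl, bl'⟩ :=
    exists_chiSq_stein_solution (p := r - 1) (by omega) hd1 hd2 hb1 hb2
  have hp : ((r - 1 : ℕ) : ℝ) = r - 1 := by
    rw [Nat.cast_sub (by omega), Nat.cast_one]
  set m := ∫ x, h x ∂(chiSq (r - 1))
  have hq : ContinuousOn (fun x => x * k x) (Set.Ici 0) := by
    have hc : ContinuousOn h (Set.Ici 0) := fun x hx => (hd1 x hx).continuousAt.continuousWithinAt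
    have : ContinuousOn (fun x => h x - m - (((r - 1 : ℕ) : ℝ) / 2 - x / 2) * g x)
        (Set.Ici 0) := by fun_prop
    refine this.congr fun x hx => ?_
    have := hS x hx
    simp only
    linarith
  have hmain := abs_sum_stein_le (n := n) (isSymmetricStep_rankStep hn hr)
    (div_pos (by linarith) hn') (by positivity) (mul_one_div_cancel hn'.ne') dg dk dl hg hq
    bk bl bl'
  have hN : (0 : ℝ) < Fintype.card (Fin n → Equiv.Perm (Fin r)) := by positivity
  have hsum : ∑ ω : Fin n → Equiv.Perm (Fin r),
      (sumSqLength (rankStep n r) ω * k (sumSqLength (rankStep n r) ω) +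
        (n * (((r : ℝ) - 1) / n) / 2 - sumSqLength (rankStep n r) ω / 2) *
          g (sumSqLength (rankStep n r) ω)) =
      Fintype.card (Fin n → Equiv.Perm (Fin r)) *
        ((∫ ω, h (friedman n r ω) ∂(friedmanMeasure n r)) - m) := by
    have hm : (Fintype.card (Fin n → Equiv.Perm (Fin r)) : ℝ) * m =
        ∑ _ω : Fin n → Equiv.Perm (Fin r), m := by
      rw [sum_const, card_univ, nsmul_eq_mul]
    rw [mul_sub, integral_friedmanMeasure, hm, ← sum_sub_distrib]
    refine sum_congr rfl fun ω _ => ?_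
    rw [friedman_eq_sumSqLength, mul_div_cancel₀ _ hn'.ne', ← hp]
    exact hS _ (sum_nonneg fun j _ => sq_nonneg _)
  rw [hsum, abs_mul, abs_of_pos hN] at hmain
  refine (le_of_mul_le_mul_left hmain hN).trans ?_
  have h1 : ((r : ℝ) - 1) / n ≤ r / n := by
    gcongr
    linarith
  have h2 : 0 ≤ 431 * (r : ℝ) / n * C2 := by positivity
  have h3 : 0 ≤ (3533 + 646 * (r : ℝ) / n) * C3 := by positivity
  refine mul_le_mul h1 ?_ (by positivity) (by positivity)
  linarith
end

section
/- Suppose n ≥ 1 and r = 2. Then for every Lipschitz function h : [0,∞) → ℝ with Lipschitz constant at most 1, |E[h(F_2)] − E[h(Y_1)]| ≤ (1/√n)·(87 + 48/√n). In particular, the Wasserstein distance between the law of F_2 and the chi-square distribution with 1 degree of freedom is at most (1/√n)(87 + 48/√n). -/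
open MeasureTheory Finset Real

/-- The density of `|Z|` on the positive half-line, for a standard Gaussian `Z`. -/
noncomputable def halfNormalPDF (x : ℝ) : ℝ := √(2 / π) * exp (-(x ^ 2 / 2))

lemma halfNormalPDF_nonneg (x : ℝ) : 0 ≤ halfNormalPDF x := by
  unfold halfNormalPDF; positivity

lemma continuous_halfNormalPDF : Continuous halfNormalPDF := by
  unfold halfNormalPDF; fun_prop

lemma integral_chiSq_one (f : ℝ → ℝ) :
    ∫ x, f x ∂(chiSq 1) = ∫ x in Set.Ioi 0, halfNormalPDF x * f (x ^ 2) := by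
  have h1 : ∫ x, f x ∂(chiSq 1) =
      ∫ x in Set.Ioi 0, ProbabilityTheory.gammaPDFReal (1 / 2) (1 / 2) x * f x := by
    unfold chiSq ProbabilityTheory.gammaMeasure
    rw [integral_withDensity_eq_integral_toReal_smul]
    · have hz : ∀ x : ℝ, x ∉ Set.Ici (0 : ℝ) →
          (ProbabilityTheory.gammaPDF (1 / 2) (1 / 2) x).toReal • f x = 0 := by
        intro x hx
        rw [ProbabilityTheory.gammaPDF_of_neg (by simpa using hx)]
        simp
      simp only [Nat.cast_one]
      rw [← setIntegral_eq_integral_of_forall_compl_eq_zero hz, integral_Ici_eq_integral_Ioi]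
      refine setIntegral_congr_fun measurableSet_Ioi fun x _ => ?_
      simp only [ProbabilityTheory.gammaPDF, smul_eq_mul]
      rw [ENNReal.toReal_ofReal
        (ProbabilityTheory.gammaPDFReal_nonneg (by norm_num) (by norm_num) x)]
    · exact (ProbabilityTheory.measurable_gammaPDFReal _ _).ennreal_ofReal
    · exact ae_of_all _ fun x => ENNReal.ofReal_lt_top
  rw [h1, ← integral_comp_rpow_Ioi_of_pos (zero_lt_two)]
  refine setIntegral_congr_fun measurableSet_Ioi fun x hx => ?_
  have hx : 0 < x := hx
  have e1 : (x : ℝ) ^ (2 : ℝ) = x ^ 2 := by norm_cast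
  have e2 : (x ^ 2) ^ ((1 : ℝ) / 2 - 1) = x⁻¹ := by
    rw [← e1, ← rpow_mul hx.le, ← rpow_neg_one]; norm_num
  have e3 : (x : ℝ) ^ ((2 : ℝ) - 1) = x := by norm_num
  have e4 : √(2 / π) = 2 * ((1 / 2 : ℝ) ^ (1 / 2 : ℝ) / √π) := by
    rw [← sqrt_eq_rpow, sqrt_div (by norm_num), sqrt_div (by norm_num)]
    have : √2 * √2 = (2 : ℝ) := mul_self_sqrt (by norm_num)
    have h2 : √2 ≠ 0 := by positivity
    have : √π ≠ 0 := by positivity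
    simp only [sqrt_one]
    field_simp
    linarith
  simp only [smul_eq_mul, e1, e3, halfNormalPDF, ProbabilityTheory.gammaPDFReal,
    if_pos (sq_nonneg x), e2, Gamma_one_half_eq, e4]
  field_simp

lemma integrable_halfNormalPDF_mul_pow (k : ℕ) :
    Integrable (fun x => halfNormalPDF x * x ^ k) := by
  have := (integrable_rpow_mul_exp_neg_mul_sq (b := 1 / 2) (by norm_num)
    (s := k) (by have : (0 : ℝ) ≤ k := k.cast_nonneg
                 linarith)).const_mul √(2 / π)
  refine this.congr (ae_of_all _ fun x => ?_)
  simp only [halfNormalPDF, rpow_natCast]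
  rw [show -(1 / 2) * x ^ 2 = -(x ^ 2 / 2) by ring]
  ring

lemma integral_halfNormalPDF : ∫ x in Set.Ioi 0, halfNormalPDF x = 1 := by
  have := integral_chiSq_one fun _ => 1
  have : IsProbabilityMeasure (chiSq 1) :=
    ProbabilityTheory.isProbabilityMeasure_gammaMeasure (by norm_num) (by norm_num)
  simp_all

lemma integral_halfNormalPDF_mul_sq : ∫ x in Set.Ioi 0, halfNormalPDF x * x ^ 2 = 1 := by
  have h0 := integral_halfNormalPDF
  have h2 := integral_rpow_mul_exp_neg_mul_rpow (p := 2) (q := 2) (b := 1 / 2)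
    (by norm_num) (by norm_num) (by norm_num)
  have h3 := integral_rpow_mul_exp_neg_mul_rpow (p := 2) (q := 0) (b := 1 / 2)
    (by norm_num) (by norm_num) (by norm_num)
  have e0 : ∫ x in Set.Ioi 0, halfNormalPDF x =
      √(2 / π) * ∫ x in Set.Ioi (0 : ℝ), x ^ (0 : ℝ) * exp (-(1 / 2) * x ^ (2 : ℝ)) := by
    rw [← integral_const_mul]
    congr 1; ext x
    simp only [halfNormalPDF, rpow_zero, rpow_two]
    ring_nf
  have e2 : ∫ x in Set.Ioi 0, halfNormalPDF x * x ^ 2 =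
      √(2 / π) * ∫ x in Set.Ioi (0 : ℝ), x ^ (2 : ℝ) * exp (-(1 / 2) * x ^ (2 : ℝ)) := by
    rw [← integral_const_mul]
    congr 1; ext x
    simp only [halfNormalPDF, rpow_two]
    ring_nf
  have hG : Gamma ((2 + 1) / 2) = 1 / 2 * Gamma ((0 + 1) / 2) := by
    rw [show ((2 : ℝ) + 1) / 2 = 1 / 2 + 1 by norm_num, Gamma_add_one (by norm_num), zero_add]
  have hp : (1 / 2 : ℝ) ^ (-((2 : ℝ) + 1) / 2) = 2 * (1 / 2 : ℝ) ^ (-((0 : ℝ) + 1) / 2) := by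
    rw [show (-((2 : ℝ) + 1) / 2) = -((0 : ℝ) + 1) / 2 + (-1) by norm_num,
      rpow_add (by norm_num), rpow_neg_one]
    norm_num [mul_comm]
  rw [e2, h2, hp, hG]
  rw [e0, h3] at h0
  linarith

lemma integral_halfNormalPDF_mul_id_le : ∫ x in Set.Ioi 0, halfNormalPDF x * x ≤ 1 := by
  have i0 := (integrable_halfNormalPDF_mul_pow 0).integrableOn (s := Set.Ioi 0)
  have i1 := (integrable_halfNormalPDF_mul_pow 1).integrableOn (s := Set.Ioi 0)
  have i2 := (integrable_halfNormalPDF_mul_pow 2).integrableOn (s := Set.Ioi 0)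
  simp only [pow_zero, mul_one, pow_one] at i0 i1
  calc ∫ x in Set.Ioi 0, halfNormalPDF x * x
      ≤ ∫ x in Set.Ioi 0, (1 / 2 * halfNormalPDF x + 1 / 2 * (halfNormalPDF x * x ^ 2)) := by
        refine integral_mono i1 ((i0.const_mul _).add (i2.const_mul _)) fun x => ?_
        have := mul_nonneg (halfNormalPDF_nonneg x) (sq_nonneg (x - 1))
        simp only
        nlinarith
    _ = 1 := by
        rw [integral_add (i0.const_mul _) (i2.const_mul _), integral_const_mul,
          integral_const_mul, integral_halfNormalPDF, integral_halfNormalPDF_mul_sq]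
        norm_num

lemma sub_le_add_one_mul_exp {n j : ℕ} (hn : n < 2 * j) (hj : j < n) :
    (n : ℝ) - j ≤ (j + 1) * exp (-(2 * (2 * j - n) / n)) := by
  have hn' : (n : ℝ) + 1 ≤ 2 * j := by exact_mod_cast hn
  have hj' : (j : ℝ) + 1 ≤ n := by exact_mod_cast hj
  have hd : (0 : ℝ) < n - j := by linarith
  have hnpos : (0 : ℝ) < n := by linarith [(Nat.cast_nonneg j : (0 : ℝ) ≤ j)]
  have hlog := le_log_one_add_of_nonneg (x := (2 * j + 1 - n : ℝ) / (n - j))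
    (div_nonneg (by linarith) hd.le)
  have e1 : 1 + (2 * j + 1 - n : ℝ) / (n - j) = (j + 1) / (n - j) := by
    field_simp; ring
  have e2 : 2 * ((2 * j + 1 - n : ℝ) / (n - j)) / ((2 * j + 1 - n : ℝ) / (n - j) + 2) =
      2 * (2 * j + 1 - n) / (n + 1) := by
    have h1 : (2 * j + 1 - n : ℝ) / (n - j) + 2 = (n + 1) / (n - j) := by
      field_simp; ring
    rw [h1]
    field_simp
  have h3 : 2 * (2 * j - n : ℝ) / n ≤ 2 * (2 * j + 1 - n) / (n + 1) := by
    rw [div_le_div_iff₀ hnpos (by linarith)]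
    nlinarith
  rw [e1, e2] at hlog
  have h4 : exp (2 * (2 * j - n : ℝ) / n) ≤ (j + 1) / (n - j) := by
    rw [← exp_log (show (0 : ℝ) < (j + 1) / (n - j) by positivity)]
    exact exp_le_exp.2 (h3.trans hlog)
  rw [le_div_iff₀ hd] at h4
  rw [exp_neg, ← div_eq_mul_inv, le_div_iff₀ (exp_pos _)]
  linarith

/-- A weighted Chebyshev sum inequality: increasing likelihood ratios favour increasing
functions. -/
lemma sum_mul_sum_le_of_ratio_monotone {s : Finset ℕ} {a b ψ : ℕ → ℝ}
    (hab : ∀ i ∈ s, ∀ j ∈ s, i ≤ j → a i * b j ≤ a j * b i)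
    (hψ : ∀ i ∈ s, ∀ j ∈ s, i ≤ j → ψ i ≤ ψ j) :
    (∑ i ∈ s, b i * ψ i) * ∑ i ∈ s, a i ≤ (∑ i ∈ s, a i * ψ i) * ∑ i ∈ s, b i := by
  have key : 0 ≤ ∑ i ∈ s, ∑ j ∈ s, (a i * b j - a j * b i) * (ψ i - ψ j) := by
    refine sum_nonneg fun i hi => sum_nonneg fun j hj => ?_
    rcases le_total i j with h | h
    · exact mul_nonneg_of_nonpos_of_nonpos (by linarith [hab i hi j hj h])
        (by linarith [hψ i hi j hj h])
    · exact mul_nonneg (by linarith [hab j hj i hi h]) (by linarith [hψ j hj i hi h])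
  have e : ∑ i ∈ s, ∑ j ∈ s, (a i * b j - a j * b i) * (ψ i - ψ j) =
      2 * ((∑ i ∈ s, a i * ψ i) * ∑ i ∈ s, b i - (∑ i ∈ s, b i * ψ i) * ∑ i ∈ s, a i) := by
    have h1 : ∑ i ∈ s, ∑ j ∈ s, (a i * b j - a j * b i) * (ψ i - ψ j) =
        (∑ i ∈ s, ∑ j ∈ s, (a i * ψ i) * b j) - (∑ i ∈ s, ∑ j ∈ s, (b i * ψ i) * a j)
        - (∑ i ∈ s, ∑ j ∈ s, a i * (b j * ψ j)) + ∑ i ∈ s, ∑ j ∈ s, b i * (a j * ψ j) := by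
      simp only [← sum_sub_distrib, ← sum_add_distrib]
      refine sum_congr rfl fun i _ => sum_congr rfl fun j _ => ?_
      ring
    rw [h1]
    simp only [← sum_mul_sum]
    ring
  linarith

lemma sum_range_eq_two_mul_upper_half {n : ℕ} {g : ℕ → ℝ}
    (hg : ∀ j ≤ n, g (n - j) = g j) :
    ∑ j ∈ range (n + 1), g j =
      2 * ∑ j ∈ Ioc (n / 2) n, g j + ∑ j ∈ range (n + 1) with 2 * j = n, g j := by
  have hU : Ioc (n / 2) n = (range (n + 1)).filter fun j => n < 2 * j := by
    ext j; simp only [mem_Ioc, Finset.mem_filter, Finset.mem_range]; omega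
  have hlow : ∑ j ∈ range (n + 1) with 2 * j < n, g j = ∑ j ∈ Ioc (n / 2) n, g j := by
    refine sum_nbij' (fun j => n - j) (fun j => n - j) ?_ ?_ ?_ ?_ ?_
    · intro j hj
      simp only [mem_Ioc, Finset.mem_filter, Finset.mem_range] at hj ⊢
      omega
    · intro j hj
      simp only [mem_Ioc, Finset.mem_filter, Finset.mem_range] at hj ⊢
      omega
    · intro j hj
      simp only [Finset.mem_filter, Finset.mem_range] at hj
      exact Nat.sub_sub_self (by omega)
    · intro j hj
      simp only [mem_Ioc] at hj
      exact Nat.sub_sub_self hj.2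
    · intro j hj
      simp only [Finset.mem_filter, Finset.mem_range] at hj
      exact (hg j (by omega)).symm
  have h1 := sum_filter_add_sum_filter_not (range (n + 1)) (fun j => n < 2 * j) g
  have h2 := sum_filter_add_sum_filter_not ((range (n + 1)).filter fun j => ¬ n < 2 * j)
    (fun j => 2 * j < n) g
  rw [filter_filter, filter_filter] at h2
  have e1 : ((range (n + 1)).filter fun j => ¬ n < 2 * j ∧ 2 * j < n) =
      (range (n + 1)).filter fun j => 2 * j < n := by
    ext j
    simp only [Finset.mem_filter]
    exact and_congr_right fun _ => by omega
  have e2 : ((range (n + 1)).filter fun j => ¬ n < 2 * j ∧ ¬ 2 * j < n) =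
      (range (n + 1)).filter fun j => 2 * j = n := by
    ext j
    simp only [Finset.mem_filter]
    exact and_congr_right fun _ => by omega
  rw [e1, e2, hlow] at h2
  rw [← hU] at h1
  linarith

lemma two_mul_sum_upper_half_choose_le (n : ℕ) :
    2 * ∑ j ∈ Ioc (n / 2) n, (n.choose j : ℝ) ≤ 2 ^ n := by
  have h := sum_range_eq_two_mul_upper_half (n := n) (g := fun j => (n.choose j : ℝ))
    (fun j hj => by simp [Nat.choose_symm hj])
  have h2 : ∑ j ∈ range (n + 1), (n.choose j : ℝ) = 2 ^ n := by
    exact_mod_cast Nat.sum_range_choose n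
  have h3 : 0 ≤ ∑ j ∈ range (n + 1) with 2 * j = n, (n.choose j : ℝ) :=
    sum_nonneg fun _ _ => by positivity
  linarith

lemma sum_choose_mul_sq (n : ℕ) :
    ∑ j ∈ range (n + 1), (n.choose j : ℝ) * (2 * j - n) ^ 2 = (n : ℝ) * 2 ^ n := by
  have h := congrArg (Polynomial.eval (1 / 2 : ℝ)) (bernsteinPolynomial.variance ℝ n)
  simp only [Polynomial.eval_finsetSum, bernsteinPolynomial, nsmul_eq_mul, Polynomial.eval_mul,
    Polynomial.eval_pow, Polynomial.eval_sub, Polynomial.eval_natCast, Polynomial.eval_X,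
    Polynomial.eval_one] at h
  have h2 : ∑ j ∈ range (n + 1), (n.choose j : ℝ) * (2 * j - n) ^ 2 =
      4 * 2 ^ n * ∑ j ∈ range (n + 1), ((n : ℝ) * (1 / 2) - j) ^ 2 *
        ((n.choose j : ℝ) * (1 / 2) ^ j * (1 - 1 / 2) ^ (n - j)) := by
    rw [mul_sum]
    refine sum_congr rfl fun j hj => ?_
    have hj : j ≤ n := by simpa [Nat.lt_succ_iff] using hj
    have e : (1 / 2 : ℝ) ^ j * (1 - 1 / 2) ^ (n - j) * 2 ^ n = 1 := by
      rw [show (1 - 1 / 2 : ℝ) = 1 / 2 by norm_num, ← pow_add, Nat.add_sub_cancel' hj,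
        ← mul_pow]
      norm_num
    linear_combination (-(n.choose j : ℝ) * (2 * j - n) ^ 2) * e
  rw [h2, h]
  ring

lemma integral_friedmanMeasure_two {n : ℕ} (hn : 1 ≤ n) (f : ℝ → ℝ) :
    ∫ ω, f (friedman n 2 ω) ∂(friedmanMeasure n 2) =
      (∑ j ∈ range (n + 1), (n.choose j : ℝ) * f ((2 * j - n) ^ 2 / n)) / 2 ^ n := by
  have : MeasurableSingletonClass (Equiv.Perm (Fin 2)) := ⟨fun _ => trivial⟩
  have hn0 : (0 : ℝ) < n := by exact_mod_cast hn
  let T : (Fin n → Equiv.Perm (Fin 2)) → Finset (Fin n) := fun ω =>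
    univ.filter fun i => ω i 0 = 1
  have hT : Function.Bijective T := by
    rw [Fintype.bijective_iff_injective_and_card]
    constructor
    · intro ω ω' h
      funext i
      have hi : ω i 0 = 1 ↔ ω' i 0 = 1 := by
        have := Finset.ext_iff.1 h i
        simpa [T] using this
      have : ∀ σ τ : Equiv.Perm (Fin 2), (σ 0 = 1 ↔ τ 0 = 1) → σ = τ := by decide
      exact this _ _ hi
    · simp [Fintype.card_perm]
  have hF : ∀ ω, friedman n 2 ω = (2 * ((T ω).card : ℝ) - n) ^ 2 / n := by
    intro ω
    have h0 : ∑ i, rho n 2 i 0 ω = (T ω).card - (n : ℝ) / 2 := by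
      have : ∀ i, rho n 2 i 0 ω = (if ω i 0 = 1 then 1 else 0) - 1 / 2 := by
        intro i
        have : ∀ σ : Equiv.Perm (Fin 2), ((σ 0 : ℕ)) = if σ 0 = 1 then 1 else 0 := by decide
        simp only [rho, this]
        push_cast
        ring
      simp only [this, sum_sub_distrib, T]
      simp
      ring
    have h1 : ∑ i, rho n 2 i 1 ω = (n : ℝ) / 2 - (T ω).card := by
      have : ∀ i, rho n 2 i 1 ω = 1 / 2 - (if ω i 0 = 1 then 1 else 0) := by
        intro i
        have : ∀ σ : Equiv.Perm (Fin 2), ((σ 1 : ℕ)) = if σ 0 = 1 then 0 else 1 := by decide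
        simp only [rho, this]
        split_ifs <;> norm_num
      simp only [this, sum_sub_distrib, T]
      simp
      ring
    simp only [friedman, Fin.sum_univ_two, Sstat, h0, h1, mul_pow, div_pow]
    rw [sq_sqrt (by norm_num), sq_sqrt (by positivity)]
    push_cast
    field_simp
    ring
  unfold friedmanMeasure
  rw [PMF.integral_eq_sum]
  simp only [PMF.uniformOfFintype_apply, smul_eq_mul, hF]
  rw [← mul_sum, hT.sum_comp (fun s : Finset (Fin n) => f ((2 * (s.card : ℝ) - n) ^ 2 / n))]
  have := Finset.sum_powerset_apply_card (fun j => f ((2 * (j : ℝ) - n) ^ 2 / n))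
    (x := (univ : Finset (Fin n)))
  simp only [powerset_univ, card_univ, Fintype.card_fin, nsmul_eq_mul] at this
  rw [this]
  simp [Fintype.card_perm, div_eq_inv_mul]

/-- The index `j` of the lattice point `2 * j - n` of the simple random walk that is matched with
a value `x > 0` of the half-normal variable; it satisfies `2 * j - n ≤ √n * x + 3`. -/
noncomputable def walkIndex (n : ℕ) (x : ℝ) : ℕ := min n ⌊(n + √n * x + 3) / 2⌋₊

lemma measurable_walkIndex (n : ℕ) : Measurable (walkIndex n) := by
  unfold walkIndex
  exact measurable_const.min (Nat.measurable_floor.comp (by fun_prop))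

lemma walkIndex_mem {n : ℕ} (hn : 1 ≤ n) {x : ℝ} (hx : 0 < x) :
    walkIndex n x ∈ Ioc (n / 2) n := by
  have h : n / 2 + 1 ≤ ⌊(n + √n * x + 3) / 2⌋₊ := by
    have h0 : 0 ≤ √n * x := by positivity
    have h1 : ((n / 2 : ℕ) : ℝ) ≤ n / 2 := Nat.cast_div_le
    refine Nat.le_floor ?_
    push_cast
    linarith
  simp only [walkIndex, mem_Ioc]
  omega

lemma two_mul_walkIndex_sub_le {n : ℕ} {x : ℝ} (hx : 0 < x) :
    2 * (walkIndex n x : ℝ) - n ≤ √n * x + 3 := by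
  have h0 : 0 ≤ √n * x := by positivity
  have h1 : (walkIndex n x : ℝ) ≤ ⌊(n + √n * x + 3) / 2⌋₊ := by
    exact_mod_cast min_le_right _ _
  have h2 := Nat.floor_le (a := (n + √n * x + 3) / 2) (by positivity)
  linarith

lemma walkIndex_add {n : ℕ} (hn : 1 ≤ n) {x : ℝ} (hx : 0 < x) (hj : walkIndex n x < n) :
    walkIndex n (x + 2 / √n) = walkIndex n x + 1 := by
  have h0 : 0 ≤ √n * x := by positivity
  have hs : √(n : ℝ) ≠ 0 := by positivity
  have e : (n + √n * (x + 2 / √n) + 3) / 2 = (n + √n * x + 3) / 2 + 1 := by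
    field_simp; ring
  have hf := Nat.floor_add_one (a := (n + √n * x + 3) / 2) (by positivity)
  unfold walkIndex at *
  rw [e, hf]
  omega

lemma mul_lt_of_walkIndex_lt {n : ℕ} {x : ℝ} (hj : walkIndex n x < n) :
    √n * x < 2 * walkIndex n x - n - 1 := by
  have h := Nat.lt_floor_add_one ((n + √n * x + 3) / 2)
  have : walkIndex n x = ⌊(n + √n * x + 3) / 2⌋₊ := by
    unfold walkIndex at *; omega
  rw [← this] at h
  linarith

/-- The values of the half-normal variable matched with the index `j`. -/
def walkCell (n j : ℕ) : Set ℝ := Set.Ioi 0 ∩ walkIndex n ⁻¹' {j}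

lemma measurableSet_walkCell (n j : ℕ) : MeasurableSet (walkCell n j) :=
  measurableSet_Ioi.inter (measurable_walkIndex n (measurableSet_singleton j))

lemma integrable_halfNormalPDF : Integrable halfNormalPDF := by
  simpa using integrable_halfNormalPDF_mul_pow 0

lemma walkCell_ratio {n j : ℕ} (hn : 1 ≤ n) (hnj : n < 2 * j) (hj : j < n) :
    ((n : ℝ) - j) * ∫ x in walkCell n j, halfNormalPDF x ≤
      (j + 1) * ∫ x in walkCell n (j + 1), halfNormalPDF x := by
  have hn0 : (0 : ℝ) < n := by exact_mod_cast hn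
  have hs : 0 < √(n : ℝ) := by positivity
  have hss : √(n : ℝ) * √n = n := mul_self_sqrt hn0.le
  set κ := exp (-(2 * (2 * j - n : ℝ) / n)) with hκ
  have hshift : κ * ∫ x in walkCell n j, halfNormalPDF x ≤
      ∫ x in walkCell n (j + 1), halfNormalPDF x := by
    rw [← integral_const_mul]
    have hint : Integrable fun x => halfNormalPDF (x + 2 / √(n : ℝ)) :=
      integrable_halfNormalPDF.comp_add_right _
    calc ∫ x in walkCell n j, κ * halfNormalPDF x
        ≤ ∫ x in walkCell n j, halfNormalPDF (x + 2 / √(n : ℝ)) := by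
          refine setIntegral_mono_on (integrable_halfNormalPDF.const_mul κ).integrableOn
            hint.integrableOn (measurableSet_walkCell n j) ?_
          rintro x ⟨hx, rfl⟩
          have hlt := mul_lt_of_walkIndex_lt hj
          simp only [halfNormalPDF]
          rw [mul_left_comm, hκ, ← exp_add]
          refine mul_le_mul_of_nonneg_left (exp_le_exp.2 ?_) (sqrt_nonneg _)
          have e1 : (x + 2 / √(n : ℝ)) ^ 2 / 2 = x ^ 2 / 2 + 2 * (√n * x + 1) / n := by
            have : ∀ s m : ℝ, 0 < s → s * s = m →
                (x + 2 / s) ^ 2 / 2 = x ^ 2 / 2 + 2 * (s * x + 1) / m := by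
              rintro s _ hs rfl
              field_simp
              ring
            exact this _ _ hs hss
          have e2 : 2 * (√n * x + 1) / n ≤ 2 * (2 * (walkIndex n x : ℝ) - n) / n := by
            gcongr
            linarith
          linarith
      _ ≤ ∫ x in (fun x => x + 2 / √(n : ℝ)) ⁻¹' walkCell n (j + 1),
            halfNormalPDF (x + 2 / √(n : ℝ)) := by
          refine setIntegral_mono_set hint.integrableOn
            (ae_of_all _ fun x => halfNormalPDF_nonneg _) (LE.le.eventuallyLE ?_)
          rintro x ⟨hx, rfl⟩
          have hx : 0 < x := hx
          exact ⟨show 0 < x + 2 / √(n : ℝ) by positivity, walkIndex_add hn hx hj⟩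
      _ = ∫ x in walkCell n (j + 1), halfNormalPDF x :=
          (measurePreserving_add_right volume (2 / √(n : ℝ))).setIntegral_preimage_emb
            (measurableEmbedding_addRight _) _ _
  have hI : 0 ≤ ∫ x in walkCell n j, halfNormalPDF x :=
    integral_nonneg halfNormalPDF_nonneg
  calc ((n : ℝ) - j) * ∫ x in walkCell n j, halfNormalPDF x
      ≤ (j + 1) * κ * ∫ x in walkCell n j, halfNormalPDF x :=
        mul_le_mul_of_nonneg_right (sub_le_add_one_mul_exp hnj hj) hI
    _ ≤ _ := by
        rw [mul_assoc]
        exact mul_le_mul_of_nonneg_left hshift (by positivity)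

lemma sum_walkCell {n : ℕ} (hn : 1 ≤ n) (ψ : ℕ → ℝ) :
    IntegrableOn (fun x => halfNormalPDF x * ψ (walkIndex n x)) (Set.Ioi 0) ∧
    ∑ j ∈ Ioc (n / 2) n, (∫ x in walkCell n j, halfNormalPDF x) * ψ j =
      ∫ x in Set.Ioi 0, halfNormalPDF x * ψ (walkIndex n x) := by
  have hU : Set.Ioi (0 : ℝ) = ⋃ j ∈ Ioc (n / 2) n, walkCell n j := by
    ext x
    simp only [walkCell, Set.mem_iUnion, Set.mem_inter_iff, Set.mem_preimage,
      Set.mem_singleton_iff]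
    exact ⟨fun hx => ⟨_, walkIndex_mem hn hx, hx, rfl⟩, fun ⟨_, _, hx, _⟩ => hx⟩
  have heq : ∀ j, Set.EqOn (fun x => halfNormalPDF x * ψ j)
      (fun x => halfNormalPDF x * ψ (walkIndex n x)) (walkCell n j) := by
    rintro j x ⟨-, rfl⟩
    rfl
  have hi : ∀ j ∈ Ioc (n / 2) n,
      IntegrableOn (fun x => halfNormalPDF x * ψ (walkIndex n x)) (walkCell n j) := fun j _ =>
    ((integrable_halfNormalPDF.mul_const (ψ j)).integrableOn).congr_fun (heq j)
      (measurableSet_walkCell n j)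
  rw [hU]
  refine ⟨(integrableOn_finset_iUnion).2 hi, ?_⟩
  rw [integral_biUnion_finset _ (fun j _ => measurableSet_walkCell n j) _ hi]
  · refine sum_congr rfl fun j _ => ?_
    rw [← integral_mul_const]
    exact setIntegral_congr_fun (measurableSet_walkCell n j) (heq j)
  · intro i _ j _ hij
    refine Set.disjoint_left.2 ?_
    rintro x ⟨-, rfl⟩ ⟨-, h⟩
    exact hij h

lemma walkCell_ratio_monotone {n : ℕ} (hn : 1 ≤ n) {i j : ℕ} (hi : i ∈ Ioc (n / 2) n)
    (hj : j ∈ Ioc (n / 2) n) (hij : i ≤ j) :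
    (∫ x in walkCell n i, halfNormalPDF x) * n.choose j ≤
      (∫ x in walkCell n j, halfNormalPDF x) * n.choose i := by
  have hmono : MonotoneOn (fun j => (∫ x in walkCell n j, halfNormalPDF x) / n.choose j)
      (Set.Ioc (n / 2) n) := by
    refine monotoneOn_of_le_add_one Set.ordConnected_Ioc fun j _ hj hj1 => ?_
    simp only [Set.mem_Ioc] at hj hj1
    have hc : (n.choose (j + 1) : ℝ) * (j + 1) = n.choose j * (n - j) := by
      rw [← Nat.cast_sub hj.2]
      exact_mod_cast Nat.choose_succ_right_eq n j
    have h1 : (0 : ℝ) < n.choose j := by exact_mod_cast Nat.choose_pos hj.2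
    have h2 : (0 : ℝ) < n.choose (j + 1) := by exact_mod_cast Nat.choose_pos hj1.2
    have hr := walkCell_ratio hn (j := j) (by omega) (by omega)
    rw [div_le_div_iff₀ h1 h2]
    have h3 : (0 : ℝ) < j + 1 := by positivity
    refine le_of_mul_le_mul_right ?_ h3
    calc _ = n.choose j * ((n - j) * ∫ x in walkCell n j, halfNormalPDF x) := by
          linear_combination (∫ x in walkCell n j, halfNormalPDF x) * hc
      _ ≤ n.choose j * ((j + 1) * ∫ x in walkCell n (j + 1), halfNormalPDF x) := by gcongr
      _ = _ := by ring
  have h := hmono (by simpa using hi) (by simpa using hj) hij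
  simp only [mem_Ioc] at hi hj
  have h1 : (0 : ℝ) < n.choose i := by exact_mod_cast Nat.choose_pos hi.2
  have h2 : (0 : ℝ) < n.choose j := by exact_mod_cast Nat.choose_pos hj.2
  rwa [div_le_div_iff₀ h1 h2] at h

/-- The squared standardized random walk is stochastically dominated by `(|Z| + 3 / √n) ^ 2`. -/
lemma sum_choose_mul_le_integral {n : ℕ} (hn : 1 ≤ n) {u : ℝ → ℝ} (hu : Monotone u)
    (hint : IntegrableOn (fun x => halfNormalPDF x * u ((x + 3 / √n) ^ 2)) (Set.Ioi 0)) :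
    (∑ j ∈ range (n + 1), (n.choose j : ℝ) * u ((2 * j - n) ^ 2 / n)) / 2 ^ n ≤
      ∫ x in Set.Ioi 0, halfNormalPDF x * u ((x + 3 / √n) ^ 2) := by
  have hn0 : (0 : ℝ) < n := by exact_mod_cast hn
  have hs : 0 < √(n : ℝ) := by positivity
  set ψ : ℕ → ℝ := fun j => u ((2 * j - n) ^ 2 / n) - u 0 with hψ
  set a : ℕ → ℝ := fun j => ∫ x in walkCell n j, halfNormalPDF x with ha
  have hψ0 : ∀ j, 0 ≤ ψ j := fun j => sub_nonneg.2 (hu (by positivity))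
  have hψm : ∀ i ∈ Ioc (n / 2) n, ∀ j ∈ Ioc (n / 2) n, i ≤ j → ψ i ≤ ψ j := by
    intro i hi j _ hij
    simp only [mem_Ioc] at hi
    have h1 : (n : ℝ) ≤ 2 * i := by exact_mod_cast (by omega : n ≤ 2 * i)
    have h2 : (i : ℝ) ≤ j := by exact_mod_cast hij
    refine sub_le_sub_right (hu ?_) _
    gcongr
  have hasum : ∑ j ∈ Ioc (n / 2) n, a j = 1 := by
    have := (sum_walkCell hn fun _ => 1).2
    simpa [integral_halfNormalPDF] using this
  have hcheb := sum_mul_sum_le_of_ratio_monotone (s := Ioc (n / 2) n) (a := a)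
    (b := fun j => (n.choose j : ℝ)) (ψ := ψ)
    (fun i hi j hj hij => walkCell_ratio_monotone hn hi hj hij) hψm
  rw [hasum, mul_one] at hcheb
  have ha0 : ∀ j, 0 ≤ a j := fun j => integral_nonneg halfNormalPDF_nonneg
  have hA : 0 ≤ ∑ j ∈ Ioc (n / 2) n, a j * ψ j :=
    sum_nonneg fun j _ => mul_nonneg (ha0 j) (hψ0 j)
  have hupper : 2 * ∑ j ∈ Ioc (n / 2) n, (n.choose j : ℝ) * ψ j ≤
      2 ^ n * ∑ j ∈ Ioc (n / 2) n, a j * ψ j := by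
    have := mul_le_mul_of_nonneg_left (two_mul_sum_upper_half_choose_le n) hA
    linarith
  have hfold := sum_range_eq_two_mul_upper_half (n := n) (g := fun j => (n.choose j : ℝ) * ψ j)
    (fun j hj => by
      simp only [hψ, Nat.choose_symm hj, Nat.cast_sub hj]
      ring_nf)
  have hmid : ∑ j ∈ range (n + 1) with 2 * j = n, (n.choose j : ℝ) * ψ j = 0 := by
    refine sum_eq_zero fun j hj => ?_
    have hj : 2 * j = n := (Finset.mem_filter.1 hj).2
    have hj : 2 * (j : ℝ) = n := by exact_mod_cast hj
    simp [hψ, hj]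
  obtain ⟨hI, hsum⟩ := sum_walkCell hn ψ
  have hi0 : IntegrableOn (fun x => halfNormalPDF x * u 0) (Set.Ioi 0) :=
    (integrable_halfNormalPDF.mul_const _).integrableOn
  have hle : ∑ j ∈ Ioc (n / 2) n, a j * ψ j ≤
      ∫ x in Set.Ioi 0, (halfNormalPDF x * u ((x + 3 / √n) ^ 2) - halfNormalPDF x * u 0) := by
    rw [ha, hsum]
    refine setIntegral_mono_on hI (hint.sub hi0) measurableSet_Ioi fun x hx => ?_
    have hx : 0 < x := hx
    rw [← mul_sub]
    refine mul_le_mul_of_nonneg_left (sub_le_sub_right (hu ?_) _) (halfNormalPDF_nonneg x)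
    have h1 := two_mul_walkIndex_sub_le (n := n) hx
    have h2 : (n : ℝ) ≤ 2 * walkIndex n x := by
      have := walkIndex_mem hn hx
      simp only [mem_Ioc] at this
      exact_mod_cast (by omega : n ≤ 2 * walkIndex n x)
    have e : (x + 3 / √n) ^ 2 = (√n * x + 3) ^ 2 / n := by
      rw [← sq_sqrt hn0.le, sqrt_sq hs.le]
      field_simp
    rw [e]
    gcongr
  rw [integral_sub hint hi0, integral_mul_const, integral_halfNormalPDF, one_mul] at hle
  have htot : ∑ j ∈ range (n + 1), (n.choose j : ℝ) * ψ j =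
      ∑ j ∈ range (n + 1), (n.choose j : ℝ) * u ((2 * j - n) ^ 2 / n) - 2 ^ n * u 0 := by
    have h2 : ∑ j ∈ range (n + 1), (n.choose j : ℝ) = 2 ^ n := by
      exact_mod_cast Nat.sum_range_choose n
    simp only [hψ, mul_sub, sum_sub_distrib, ← sum_mul, h2]
  rw [div_le_iff₀ (by positivity)]
  have hp : (0 : ℝ) < 2 ^ n := by positivity
  have := mul_le_mul_of_nonneg_left hle hp.le
  linarith

lemma friedman_two_sub_chiSq_le {n : ℕ} (hn : 1 ≤ n) {h : ℝ → ℝ} (hL : LipschitzWith 1 h) :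
    (∫ ω, h (friedman n 2 ω) ∂(friedmanMeasure n 2)) - ∫ x, h x ∂(chiSq 1) ≤
      12 / √n + 18 / n := by
  have hn0 : (0 : ℝ) < n := by exact_mod_cast hn
  set δ := 3 / √(n : ℝ) with hδ
  have hδ0 : 0 ≤ δ := by positivity
  have hlip : ∀ x y, x ≤ y → |h y - h x| ≤ y - x := fun x y hxy => by
    have := hL.dist_le_mul y x
    rwa [Real.dist_eq, Real.dist_eq, NNReal.coe_one, one_mul,
      abs_of_nonneg (sub_nonneg.2 hxy)] at this
  have hu : Monotone fun y => y + h y := fun x y hxy => by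
    have := (abs_le.1 (hlip x y hxy)).1
    simp only
    linarith
  have i0 := integrable_halfNormalPDF
  have i1 := integrable_halfNormalPDF_mul_pow 1
  have i2 := integrable_halfNormalPDF_mul_pow 2
  simp only [pow_one] at i1
  have hcont := hL.continuous
  have hH : ∀ c : ℝ, 0 ≤ c → Integrable fun x => halfNormalPDF x * h ((x + c) ^ 2) := by
    intro c hc
    refine Integrable.mono' (g := fun x =>
      (|h 0| + 2 * c ^ 2) * halfNormalPDF x + 2 * (halfNormalPDF x * x ^ 2))
      ((i0.const_mul _).add (i2.const_mul _)) ?_ (ae_of_all _ fun x => ?_)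
    · exact (continuous_halfNormalPDF.mul (hcont.comp (by fun_prop))).aestronglyMeasurable
    · rw [norm_mul, norm_of_nonneg (halfNormalPDF_nonneg x), Real.norm_eq_abs]
      have h1 := hlip 0 ((x + c) ^ 2) (sq_nonneg _)
      have h2 : |h ((x + c) ^ 2)| ≤ |h 0| + 2 * c ^ 2 + 2 * x ^ 2 := by
        have := abs_sub_abs_le_abs_sub (h ((x + c) ^ 2)) (h 0)
        nlinarith [sq_nonneg (x - c)]
      have := mul_le_mul_of_nonneg_left h2 (halfNormalPDF_nonneg x)
      linarith
  have iδ : Integrable fun x => halfNormalPDF x * (x + δ) ^ 2 := by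
    refine ((i2.add (i1.const_mul (2 * δ))).add (i0.const_mul (δ ^ 2))).congr
      (ae_of_all _ fun x => ?_)
    simp only [Pi.add_apply]
    ring
  have hdom := sum_choose_mul_le_integral hn hu (by
    have := ((iδ.add (hH δ hδ0)).integrableOn (s := Set.Ioi 0))
    refine this.congr_fun (fun x _ => ?_) measurableSet_Ioi
    simp only [Pi.add_apply]
    ring)
  have hleft : (∑ j ∈ range (n + 1), (n.choose j : ℝ) *
      ((2 * j - n) ^ 2 / n + h ((2 * j - n) ^ 2 / n))) / 2 ^ n =
      1 + ∫ ω, h (friedman n 2 ω) ∂(friedmanMeasure n 2) := by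
    rw [integral_friedmanMeasure_two hn]
    simp only [mul_add, sum_add_distrib, add_div]
    congr 1
    simp only [← mul_div_assoc, ← sum_div, sum_choose_mul_sq]
    field_simp
  have hright : ∫ x in Set.Ioi 0, halfNormalPDF x * ((x + δ) ^ 2 + h ((x + δ) ^ 2)) ≤
      ∫ x in Set.Ioi 0, (halfNormalPDF x * h (x ^ 2) + halfNormalPDF x * x ^ 2 +
        4 * δ * (halfNormalPDF x * x) + 2 * δ ^ 2 * halfNormalPDF x) := by
    have hH0 := hH 0 le_rfl
    simp only [add_zero] at hH0
    refine setIntegral_mono_on ?_ ?_ measurableSet_Ioi fun x hx => ?_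
    · refine ((iδ.add (hH δ hδ0)).congr (ae_of_all _ fun x => ?_)).integrableOn
      simp only [Pi.add_apply]
      ring
    · exact (((hH0.add i2).add (i1.const_mul _)).add (i0.const_mul _)).integrableOn
    · have hx : 0 < x := hx
      have h1 := (abs_le.1 (hlip (x ^ 2) ((x + δ) ^ 2) (by nlinarith [mul_nonneg hx.le hδ0]))).2
      have h2 : (x + δ) ^ 2 + h ((x + δ) ^ 2) ≤ h (x ^ 2) + x ^ 2 + 4 * δ * x + 2 * δ ^ 2 := by
        nlinarith
      have := mul_le_mul_of_nonneg_left h2 (halfNormalPDF_nonneg x)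
      linarith
  have hH0 := (hH 0 le_rfl).integrableOn (s := Set.Ioi 0)
  simp only [add_zero] at hH0
  have j2 := i2.integrableOn (s := Set.Ioi 0)
  have j1 := (i1.const_mul (4 * δ)).integrableOn (s := Set.Ioi 0)
  have j0 := (i0.const_mul (2 * δ ^ 2)).integrableOn (s := Set.Ioi 0)
  have j3 : IntegrableOn (fun x => halfNormalPDF x * h (x ^ 2) + halfNormalPDF x * x ^ 2)
    (Set.Ioi 0) := hH0.add j2
  have j4 : IntegrableOn (fun x => halfNormalPDF x * h (x ^ 2) + halfNormalPDF x * x ^ 2 +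
    4 * δ * (halfNormalPDF x * x)) (Set.Ioi 0) := j3.add j1
  rw [integral_add j4 j0, integral_add j3 j1, integral_add hH0 j2, integral_const_mul,
    integral_const_mul, integral_halfNormalPDF,
    integral_halfNormalPDF_mul_sq, ← integral_chiSq_one] at hright
  have hm := mul_le_mul_of_nonneg_left integral_halfNormalPDF_mul_id_le
    (by positivity : 0 ≤ 4 * δ)
  have e1 : 4 * δ = 12 / √n := by rw [hδ]; ring
  have e2 : 2 * δ ^ 2 = 18 / n := by rw [hδ, div_pow, sq_sqrt hn0.le]; ring
  rw [hleft] at hdom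
  linarith

/-- **Proposition 1.4, (1.5) (Gaunt–Reinert).** For `n ≥ 1` and every Lipschitz function
`h : ℝ⁺ → ℝ` with Lipschitz constant at most 1,
`|E[h(F_2)] − E[h(Y_1)]| ≤ (1/√n)(87 + 48/√n)`; that is, the Wasserstein distance between
the law of `F_2` and the chi-square distribution with 1 degree of freedom is at most
`(1/√n)(87 + 48/√n)`. -/
theorem friedman_two_wasserstein_bound (n : ℕ) (hn : 1 ≤ n)
    (h : ℝ → ℝ) (hL : LipschitzWith 1 h) :
    |(∫ ω, h (friedman n 2 ω) ∂(friedmanMeasure n 2)) - ∫ x, h x ∂(chiSq 1)|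
      ≤ 1 / Real.sqrt n * (87 + 48 / Real.sqrt n) := by
  have hn0 : (0 : ℝ) < n := by exact_mod_cast hn
  have hs : 0 < √(n : ℝ) := by positivity
  have hbound : 12 / √n + 18 / n ≤ 1 / √n * (87 + 48 / √(n : ℝ)) := by
    have e : 1 / √n * (87 + 48 / √(n : ℝ)) = 87 / √n + 48 / n := by
      rw [mul_add, div_mul_div_comm, mul_self_sqrt hn0.le]
      ring
    rw [e]
    gcongr <;> norm_num
  have h1 := friedman_two_sub_chiSq_le hn hL
  have h2 := friedman_two_sub_chiSq_le hn hL.neg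
  simp only [Pi.neg_apply, integral_neg] at h2
  rw [abs_le]
  constructor <;> linarith
end
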